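/- arXiv:2012.10864 — 2 statements merged into one kernel-verified Lean document; each statement's English description precedes it below -/
import Mathlib

section
/- Mittag-Leffler type operators: under (H0), let β > 0 and K = k₀⁺(1). For every g ∈ L¹[−1,1] (respectively g ∈ C[−1,1]) and every integer n ≥ 1, the iterate (I^ψ_+)ⁿ g is continuous on [−1,1] and satisfies |(I^ψ_+)ⁿ g(x)| ≤ 2K ‖g‖ (K(1+x))^{n−1}/(n−1)! for every x ∈ [−1,1], where ‖g‖ is the L¹ (respectively supremum) norm. Consequently the series E^{ψ,β}_+ g := Σ_{n=0}^∞ βⁿ (I^ψ_+)ⁿ g converges in L¹[−1,1] (respectively in C[−1,1]) and defines a bounded linear operator with ‖E^{ψ,β}_+ g‖ ≤ ‖g‖ (1 + 2Kβ e^{2Kβ}). Moreover, for every g ∈ L¹[−1,1], the function u = E^{ψ,β}_+ I^ψ_+ g satisfies ∂^ψ_+ u = g + β u a.e. on [−1,1]. -/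
open MeasureTheory Set Filter Topology

noncomputable section

/-- The tail `φ((y, ∞))` of the Lévy measure `φ`. -/
def levyTail (φ : Measure ℝ) (y : ℝ) : ℝ := (φ (Ioi y)).toReal

/-- The function `Φ(x) = ∫_x^∞ φ((y,∞)) dy` for `x > 0`, and `0` for `x ≤ 0`. -/
def PhiFn (φ : Measure ℝ) (x : ℝ) : ℝ :=
  if 0 < x then ∫ y in Ioi x, levyTail φ y else 0

/-- The Laplace exponent `ψ(ξ) = ξ² ∫_0^∞ e^{-ξ x} Φ(x) dx`. -/
def psiFn (φ : Measure ℝ) (ξ : ℂ) : ℂ :=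
  ξ ^ 2 * ∫ x in Ioi (0 : ℝ), Complex.exp (-ξ * (x : ℂ)) * (PhiFn φ x : ℂ)

/-- Assumption (H0): `φ` is a nonnegative Borel measure on `(0,∞)` with
`∫ (z² ∧ z) φ(dz) < ∞` and `∫_{(0,1)} z φ(dz) = ∞`. -/
def H0 (φ : Measure ℝ) : Prop :=
  φ (Iic 0) = 0 ∧
  (∫⁻ z in Ioi (0 : ℝ), ENNReal.ofReal (min (z ^ 2) z) ∂φ) < ⊤ ∧
  (∫⁻ z in Ioo (0 : ℝ) 1, ENNReal.ofReal z ∂φ) = ⊤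

/-- The defining properties of the scale kernel `k₋₁⁺` (extension by zero to `(-∞,-1)`
of the scale function `k₋₁` of Lemma 3.1): nonnegative on `[-1,∞)`, continuous on
`(-1,∞)`, locally integrable, of sub-exponential growth, with Laplace transform
`∫_0^∞ e^{-ξ y} k₋₁(y-1) dy = ξ/ψ(ξ)` on `{Re ξ > 0}`. -/
def IsScaleKernel (φ : Measure ℝ) (k : ℝ → ℝ) : Prop :=
  (∀ x : ℝ, x < -1 → k x = 0) ∧
  (∀ x : ℝ, -1 ≤ x → 0 ≤ k x) ∧
  ContinuousOn k (Ioi (-1)) ∧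
  LocallyIntegrableOn k (Ici (-1)) ∧
  (∀ ε : ℝ, 0 < ε → Tendsto (fun x : ℝ => Real.exp (-ε * x) * k x) atTop (nhds 0)) ∧
  ∀ ξ : ℂ, 0 < ξ.re →
    IntegrableOn (fun y : ℝ => Complex.exp (-ξ * (y : ℂ)) * (k (y - 1) : ℂ)) (Ioi 0) ∧
    (∫ y in Ioi (0 : ℝ), Complex.exp (-ξ * (y : ℂ)) * (k (y - 1) : ℂ)) = ξ / psiFn φ ξ

/-- Iterated antiderivatives: `kIter k 0 = k₋₁⁺` and `kIter k (n+1) = I₊ (kIter k n)`,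
so that `kₙ⁺ = kIter k (n+1)` for `n ≥ -1`. -/
def kIter (k : ℝ → ℝ) : ℕ → ℝ → ℝ
  | 0 => k
  | m + 1 => fun x => ∫ y in Iic x, kIter k m y

/-- The Lévy integral operator `I^ψ_+ f (x) = ∫_{-1}^x k₀⁺(x-y-1) f(y) dy`. -/
def Iop (k0 f : ℝ → ℝ) (x : ℝ) : ℝ := ∫ y in (-1 : ℝ)..x, k0 (x - y - 1) * f y

/-- Iterates `(I^ψ_+)ⁿ f`. -/
def IopIter (k0 f : ℝ → ℝ) : ℕ → ℝ → ℝ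
  | 0 => f
  | n + 1 => Iop k0 (IopIter k0 f n)

/-- The Mittag-Leffler type operator `E^{ψ,β}_+ f = Σ_{n≥0} βⁿ (I^ψ_+)ⁿ f`. -/
def MLop (k0 : ℝ → ℝ) (β : ℝ) (f : ℝ → ℝ) (x : ℝ) : ℝ :=
  ∑' n : ℕ, β ^ n * IopIter k0 f n x

/-!
The kernel `k₀⁺` vanishes on `(-∞, -1]` and is bounded by `K = k₀⁺(1)` on `(-∞, 1]`, so each
application of `I₊` integrates a pointwise bound and multiplies it by `K`. Hence the iterates decay
like `(K (1 + x)) ^ n / n!`, the Neumann series converges, and `E g = g + β E I₊ g`.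

The identity for `∂^ψ_+` rests on the Sonine relation `Φ ⋆ k₋₁⁺(· - 1) = 1` on `(0, ∞)`: the
Laplace transforms `ψ(ξ) / ξ²` and `ξ / ψ(ξ)` of the two factors multiply to `1 / ξ`, and Laplace
transforms determine measures. Since `E I₊ g = I₊ E g` has the density `k₋₁⁺(· - 1) ⋆ E g`,
convolving that density with `Φ` gives the primitive of `E g`, whose derivative is
`E g = g + β E I₊ g` almost everywhere.
-/

lemma Iop_congr {k0 f g : ℝ → ℝ} {x : ℝ} (hfg : EqOn f g (Icc (-1) x)) (hx : -1 ≤ x) :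
    Iop k0 f x = Iop k0 g x :=
  intervalIntegral.integral_congr fun y hy => by
    rw [uIcc_of_le hx] at hy
    simp only [hfg hy]

lemma IopIter_Iop (k0 f : ℝ → ℝ) (n : ℕ) : IopIter k0 (Iop k0 f) n = IopIter k0 f (n + 1) := by
  induction n with
  | zero => rfl
  | succ n ih => exact congrArg (Iop k0) ih

lemma integral_mul_pow_div_factorial (M K x : ℝ) (n : ℕ) :
    K * ∫ y in -1..x, M * (K * (1 + y)) ^ n / n.factorial =
      M * (K * (1 + x)) ^ (n + 1) / (n + 1).factorial := by
  have hfactor (y : ℝ) : M * (K * (1 + y)) ^ n / n.factorial =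
      M * K ^ n / n.factorial * (1 + y) ^ n := by rw [mul_pow]; ring
  simp_rw [hfactor]
  rw [intervalIntegral.integral_const_mul,
    intervalIntegral.integral_comp_add_left (fun y : ℝ => y ^ n), integral_pow,
    Nat.factorial_succ, mul_pow]
  push_cast
  field_simp
  ring

lemma hasSum_pow_div_factorial (r : ℝ) :
    HasSum (fun n : ℕ => r ^ n / n.factorial) (Real.exp r) := by
  rw [Real.exp_eq_exp_ℝ]
  exact NormedSpace.expSeries_div_hasSum_exp r

lemma exp_le_one_add_mul_exp (r : ℝ) : Real.exp r ≤ 1 + r * Real.exp r := by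
  have hmul := mul_le_mul_of_nonneg_right (Real.one_sub_le_exp_neg r) (Real.exp_pos r).le
  rw [← Real.exp_add, neg_add_cancel, Real.exp_zero] at hmul
  linarith

lemma abs_le_sSup_image_abs {f : ℝ → ℝ} {a b x : ℝ} (hf : ContinuousOn f (Icc a b))
    (hx : x ∈ Icc a b) : |f x| ≤ sSup ((fun y => |f y|) '' Icc a b) :=
  le_csSup (isCompact_Icc.bddAbove_image hf.abs) (mem_image_of_mem _ hx)

lemma setIntegral_abs_le_mul_sSup {f : ℝ → ℝ} {a b : ℝ} (hab : a ≤ b)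
    (hf : ContinuousOn f (Icc a b)) :
    ∫ x in Icc a b, |f x| ≤ (b - a) * sSup ((fun y => |f y|) '' Icc a b) := by
  rw [← Real.volume_real_Icc_of_le hab, ← smul_eq_mul, ← setIntegral_const]
  exact setIntegral_mono_on hf.integrableOn_Icc.abs (integrable_const _) measurableSet_Icc
    fun x hx => abs_le_sSup_image_abs hf hx

/-- The hypotheses on `k0` under which `Iop k0` is a bounded Volterra operator on `[-1, b]`, with
`K` a bound for the kernel. Since `Iop` evaluates `k0` at `x - y - 1`, causality means that `k0`
vanishes on `(-∞, -1]`. -/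
structure IsVolterraKernel (k0 : ℝ → ℝ) (b K : ℝ) : Prop where
  continuous : Continuous k0
  eq_zero : ∀ x ≤ -1, k0 x = 0
  abs_le : ∀ x ≤ b, |k0 x| ≤ K

namespace IsVolterraKernel

variable {k0 f : ℝ → ℝ} {b K M x : ℝ}

lemma nonneg (hk : IsVolterraKernel k0 b K) : 0 ≤ K :=
  (abs_nonneg _).trans (hk.abs_le b le_rfl)

lemma Iop_eq_setIntegral (hk : IsVolterraKernel k0 b K) (hx : x ∈ Icc (-1) b) :
    Iop k0 f x = ∫ y in Ioc (-1) b, k0 (x - y - 1) * f y := by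
  rw [Iop, intervalIntegral.integral_of_le hx.1]
  refine (setIntegral_eq_of_subset_of_forall_sdiff_eq_zero measurableSet_Ioc
    (Ioc_subset_Ioc_right hx.2) fun y hy => ?_).symm
  have hxy : x < y := not_le.1 fun hyx => hy.2 ⟨hy.1.1, hyx⟩
  rw [hk.eq_zero _ (by linarith), zero_mul]

lemma integrableOn_mul (hk : IsVolterraKernel k0 b K) (hf : IntegrableOn f (Icc (-1) b))
    (hx : x ≤ b) : IntegrableOn (fun y => k0 (x - y - 1) * f y) (Ioc (-1) b) := by
  have hcont := hk.continuous
  refine (hf.mono_set Ioc_subset_Icc_self).bdd_mul (c := K) (by fun_prop) ?_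
  filter_upwards [ae_restrict_mem measurableSet_Ioc] with y hy
  exact hk.abs_le _ (by linarith [hy.1])

lemma continuousOn_Iop (hk : IsVolterraKernel k0 b K) (hf : IntegrableOn f (Icc (-1) b)) :
    ContinuousOn (Iop k0 f) (Icc (-1) b) := by
  have hcont := hk.continuous
  refine ContinuousOn.congr ?_ fun x hx => hk.Iop_eq_setIntegral hx
  refine continuousOn_of_dominated (bound := fun y => K * |f y|)
    (fun x hx => (hk.integrableOn_mul hf hx.2).aestronglyMeasurable) (fun x hx => ?_)
    ((hf.mono_set Ioc_subset_Icc_self).abs.const_mul K)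
    (Eventually.of_forall fun y => by fun_prop)
  filter_upwards [ae_restrict_mem measurableSet_Ioc] with y hy
  rw [Real.norm_eq_abs, abs_mul]
  gcongr
  exact hk.abs_le _ (by linarith [hy.1, hx.2])

lemma abs_Iop_le (hk : IsVolterraKernel k0 b K) (hf : IntegrableOn f (Icc (-1) b))
    (hx : x ∈ Icc (-1) b) : |Iop k0 f x| ≤ K * ∫ y in -1..x, |f y| := by
  have hfx : IntervalIntegrable f volume (-1) x :=
    (intervalIntegrable_iff_integrableOn_Icc_of_le hx.1).2
      (hf.mono_set (Icc_subset_Icc_right hx.2))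
  rw [Iop, ← intervalIntegral.integral_const_mul, ← Real.norm_eq_abs]
  refine intervalIntegral.norm_integral_le_of_norm_le hx.1
    (Eventually.of_forall fun y hy => ?_) (hfx.abs.const_mul K)
  rw [Real.norm_eq_abs, abs_mul]
  gcongr
  exact hk.abs_le _ (by linarith [hy.1, hx.2])

lemma abs_Iop_le_L1 (hk : IsVolterraKernel k0 b K) (hf : IntegrableOn f (Icc (-1) b))
    (hx : x ∈ Icc (-1) b) : |Iop k0 f x| ≤ K * ∫ y in Icc (-1) b, |f y| := by
  refine (hk.abs_Iop_le hf hx).trans (mul_le_mul_of_nonneg_left ?_ hk.nonneg)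
  rw [intervalIntegral.integral_of_le hx.1]
  exact setIntegral_mono_set hf.abs (Eventually.of_forall fun y => abs_nonneg _)
    (Ioc_subset_Icc_self.trans (Icc_subset_Icc_right hx.2)).eventuallyLE

lemma Iop_add_const_mul {g : ℝ → ℝ} (hk : IsVolterraKernel k0 b K)
    (hf : IntegrableOn f (Icc (-1) b)) (hg : IntegrableOn g (Icc (-1) b)) (c : ℝ)
    (hx : x ∈ Icc (-1) b) :
    Iop k0 (fun y => f y + c * g y) x = Iop k0 f x + c * Iop k0 g x := by
  simp only [hk.Iop_eq_setIntegral hx]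
  rw [← integral_const_mul, ← integral_add (hk.integrableOn_mul hf hx.2)
    ((hk.integrableOn_mul hg hx.2).const_mul c)]
  exact integral_congr_ae (Eventually.of_forall fun y => by ring)

lemma integrableOn_IopIter (hk : IsVolterraKernel k0 b K) (hf : IntegrableOn f (Icc (-1) b)) :
    ∀ n, IntegrableOn (IopIter k0 f n) (Icc (-1) b)
  | 0 => hf
  | n + 1 => (hk.continuousOn_Iop (hk.integrableOn_IopIter hf n)).integrableOn_Icc

lemma continuousOn_IopIter_succ (hk : IsVolterraKernel k0 b K)
    (hf : IntegrableOn f (Icc (-1) b)) (n : ℕ) :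
    ContinuousOn (IopIter k0 f (n + 1)) (Icc (-1) b) :=
  hk.continuousOn_Iop (hk.integrableOn_IopIter hf n)

lemma abs_IopIter_le (hk : IsVolterraKernel k0 b K) (hf : IntegrableOn f (Icc (-1) b))
    (hM : ∀ y ∈ Icc (-1) b, |f y| ≤ M) (n : ℕ) (hx : x ∈ Icc (-1) b) :
    |IopIter k0 f n x| ≤ M * (K * (1 + x)) ^ n / n.factorial := by
  induction n generalizing x with
  | zero => simpa [IopIter] using hM x hx
  | succ n ih =>
    have hint := hk.integrableOn_IopIter hf n
    refine (hk.abs_Iop_le hint hx).trans ?_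
    rw [← integral_mul_pow_div_factorial]
    refine mul_le_mul_of_nonneg_left ?_ hk.nonneg
    refine intervalIntegral.integral_mono_on hx.1 ?_
      (Continuous.intervalIntegrable (by fun_prop) _ _) fun y hy => ih ⟨hy.1, hy.2.trans hx.2⟩
    exact (intervalIntegrable_iff_integrableOn_Icc_of_le hx.1).2
      (IntegrableOn.mono_set hint.abs (Icc_subset_Icc_right hx.2))

lemma abs_IopIter_succ_le (hk : IsVolterraKernel k0 b K) (hf : IntegrableOn f (Icc (-1) b))
    (hM : K * ∫ y in Icc (-1) b, |f y| ≤ M) (n : ℕ) (hx : x ∈ Icc (-1) b) :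
    |IopIter k0 f (n + 1) x| ≤ M * (K * (1 + x)) ^ n / n.factorial := by
  rw [← IopIter_Iop]
  exact hk.abs_IopIter_le (hk.continuousOn_Iop hf).integrableOn_Icc
    (fun y hy => (hk.abs_Iop_le_L1 hf hy).trans hM) n hx

lemma norm_pow_mul_IopIter_le (hk : IsVolterraKernel k0 b K) (hf : IntegrableOn f (Icc (-1) b))
    (hM : ∀ y ∈ Icc (-1) b, |f y| ≤ M) (β : ℝ) (n : ℕ) (hx : x ∈ Icc (-1) b) :
    ‖β ^ n * IopIter k0 f n x‖ ≤ M * ((K * (1 + b) * |β|) ^ n / n.factorial) := by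
  have hM0 : 0 ≤ M := (abs_nonneg _).trans (hM x hx)
  have hK := hk.nonneg
  have hx1 : 0 ≤ 1 + x := by linarith [hx.1]
  rw [norm_mul, norm_pow, Real.norm_eq_abs, Real.norm_eq_abs]
  calc |β| ^ n * |IopIter k0 f n x|
      ≤ |β| ^ n * (M * (K * (1 + x)) ^ n / n.factorial) := by
        gcongr; exact hk.abs_IopIter_le hf hM n hx
    _ ≤ |β| ^ n * (M * (K * (1 + b)) ^ n / n.factorial) := by
        gcongr; exact hx.2
    _ = M * ((K * (1 + b) * |β|) ^ n / n.factorial) := by rw [mul_pow _ |β|]; ring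

lemma abs_MLop_le (hk : IsVolterraKernel k0 b K) (hf : IntegrableOn f (Icc (-1) b))
    (hM : ∀ y ∈ Icc (-1) b, |f y| ≤ M) (β : ℝ) (hx : x ∈ Icc (-1) b) :
    |MLop k0 β f x| ≤ M * Real.exp (K * (1 + b) * |β|) :=
  tsum_of_norm_bounded ((hasSum_pow_div_factorial _).mul_left M)
    fun n => hk.norm_pow_mul_IopIter_le hf hM β n hx

lemma abs_MLop_le_mul_one_add (hk : IsVolterraKernel k0 b K)
    (hf : IntegrableOn f (Icc (-1) b)) (hM : ∀ y ∈ Icc (-1) b, |f y| ≤ M) (β : ℝ)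
    (hx : x ∈ Icc (-1) b) :
    |MLop k0 β f x| ≤ M * (1 + K * (1 + b) * |β| * Real.exp (K * (1 + b) * |β|)) :=
  (hk.abs_MLop_le hf hM β hx).trans
    (mul_le_mul_of_nonneg_left (exp_le_one_add_mul_exp _) ((abs_nonneg _).trans (hM x hx)))

lemma summable_of_abs_le (hk : IsVolterraKernel k0 b K) (hf : IntegrableOn f (Icc (-1) b))
    (hM : ∀ y ∈ Icc (-1) b, |f y| ≤ M) (β : ℝ) (hx : x ∈ Icc (-1) b) :
    Summable fun n : ℕ => β ^ n * IopIter k0 f n x :=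
  ((hasSum_pow_div_factorial _).mul_left M).summable.of_norm_bounded
    fun n => hk.norm_pow_mul_IopIter_le hf hM β n hx

lemma continuousOn_MLop (hk : IsVolterraKernel k0 b K) (hf : ContinuousOn f (Icc (-1) b))
    (β : ℝ) : ContinuousOn (MLop k0 β f) (Icc (-1) b) := by
  obtain ⟨M, hM⟩ := isCompact_Icc.exists_bound_of_continuousOn hf
  refine continuousOn_tsum (fun n => ?_)
    ((hasSum_pow_div_factorial _).mul_left M).summable
    fun n x hx => hk.norm_pow_mul_IopIter_le hf.integrableOn_Icc hM β n hx
  cases n with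
  | zero => exact continuousOn_const.mul hf
  | succ n => exact continuousOn_const.mul (hk.continuousOn_IopIter_succ hf.integrableOn_Icc n)

lemma continuousOn_MLop_Iop (hk : IsVolterraKernel k0 b K) (hf : IntegrableOn f (Icc (-1) b))
    (β : ℝ) : ContinuousOn (MLop k0 β (Iop k0 f)) (Icc (-1) b) :=
  hk.continuousOn_MLop (hk.continuousOn_Iop hf) β

lemma summable_MLop (hk : IsVolterraKernel k0 b K) (hf : IntegrableOn f (Icc (-1) b)) (β : ℝ)
    (hx : x ∈ Icc (-1) b) : Summable fun n : ℕ => β ^ n * IopIter k0 f n x := by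
  rw [← summable_nat_add_iff 1]
  have hIop := hk.summable_of_abs_le (hk.continuousOn_Iop hf).integrableOn_Icc
    (fun y hy => hk.abs_Iop_le_L1 hf hy) β hx
  refine (hIop.mul_left β).congr fun n => ?_
  rw [IopIter_Iop, pow_succ]
  ring

lemma MLop_eq_add (hk : IsVolterraKernel k0 b K) (hf : IntegrableOn f (Icc (-1) b)) (β : ℝ)
    (hx : x ∈ Icc (-1) b) : MLop k0 β f x = f x + β * MLop k0 β (Iop k0 f) x := by
  rw [MLop, (hk.summable_MLop hf β hx).tsum_eq_zero_add, MLop, ← tsum_mul_left]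
  congr 1
  · rw [pow_zero, one_mul, IopIter]
  · refine tsum_congr fun n => ?_
    rw [IopIter_Iop, pow_succ]
    ring

lemma integrableOn_MLop (hk : IsVolterraKernel k0 b K) (hf : IntegrableOn f (Icc (-1) b))
    (β : ℝ) : IntegrableOn (MLop k0 β f) (Icc (-1) b) :=
  IntegrableOn.congr_fun (hf.add ((hk.continuousOn_MLop_Iop hf β).integrableOn_Icc.const_mul β))
    (fun _ hx => (hk.MLop_eq_add hf β hx).symm) measurableSet_Icc

lemma integral_abs_MLop_le (hk : IsVolterraKernel k0 b K) (hb : -1 ≤ b)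
    (hf : IntegrableOn f (Icc (-1) b)) (β : ℝ) :
    ∫ x in Icc (-1) b, |MLop k0 β f x| ≤
      (∫ x in Icc (-1) b, |f x|) *
        (1 + K * (1 + b) * |β| * Real.exp (K * (1 + b) * |β|)) := by
  set L := ∫ x in Icc (-1) b, |f x|
  calc ∫ x in Icc (-1) b, |MLop k0 β f x|
      ≤ ∫ x in Icc (-1) b, (|f x| + |β| * (K * L * Real.exp (K * (1 + b) * |β|))) := by
        refine setIntegral_mono_on (hk.integrableOn_MLop hf β).abs
          (hf.abs.add (integrable_const _)) measurableSet_Icc fun x hx => ?_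
        rw [hk.MLop_eq_add hf β hx]
        refine (abs_add_le _ _).trans ?_
        rw [abs_mul]
        gcongr
        exact hk.abs_MLop_le (hk.continuousOn_Iop hf).integrableOn_Icc
          (fun y hy => hk.abs_Iop_le_L1 hf hy) β hx
    _ = L * (1 + K * (1 + b) * |β| * Real.exp (K * (1 + b) * |β|)) := by
        rw [integral_add hf.abs (integrable_const _), setIntegral_const,
          Real.volume_real_Icc_of_le hb, smul_eq_mul]
        ring

lemma Iop_MLop_of_abs_le (hk : IsVolterraKernel k0 b K) (hf : IntegrableOn f (Icc (-1) b))
    (hM : ∀ y ∈ Icc (-1) b, |f y| ≤ M) (β : ℝ) (hx : x ∈ Icc (-1) b) :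
    Iop k0 (MLop k0 β f) x = MLop k0 β (Iop k0 f) x := by
  set c : ℝ := K * (1 + b) * |β|
  have hexp := (hasSum_pow_div_factorial c).mul_left M
  have hIcc {y : ℝ} (hy : y ∈ uIoc (-1) x) : y ∈ Icc (-1) b := by
    rw [uIoc_of_le hx.1] at hy
    exact ⟨hy.1.le, hy.2.trans hx.2⟩
  have hsum : HasSum (fun n : ℕ => ∫ y in -1..x, k0 (x - y - 1) * (β ^ n * IopIter k0 f n y))
      (Iop k0 (MLop k0 β f) x) := by
    refine intervalIntegral.hasSum_integral_of_dominated_convergence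
      (fun n _ => K * (M * (c ^ n / n.factorial))) (fun n => ?_)
      (fun n => ae_of_all _ fun y hy => ?_)
      (ae_of_all _ fun _ _ => (hexp.mul_left K).summable) intervalIntegrable_const
      (ae_of_all _ fun y hy => (hk.summable_of_abs_le hf hM β (hIcc hy)).hasSum.mul_left _)
    · have hterm := (hk.integrableOn_IopIter hf n).const_mul (β ^ n)
      exact ((hk.integrableOn_mul hterm hx.2).mono_set fun y hy => by
        rw [uIoc_of_le hx.1] at hy
        exact ⟨hy.1, hy.2.trans hx.2⟩).aestronglyMeasurable
    · rw [norm_mul]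
      gcongr
      · exact hk.nonneg
      · exact hk.abs_le _ (by linarith [(hIcc hy).1, hx.2])
      · exact hk.norm_pow_mul_IopIter_le hf hM β n (hIcc hy)
  rw [← hsum.tsum_eq, MLop]
  refine tsum_congr fun n => ?_
  rw [IopIter_Iop, IopIter, Iop, ← intervalIntegral.integral_const_mul]
  simp only [mul_left_comm]

-- `MLop f = f + β MLop (Iop f)` reduces the claim to the bounded function `Iop f`.
lemma Iop_MLop (hk : IsVolterraKernel k0 b K) (hf : IntegrableOn f (Icc (-1) b)) (β : ℝ)
    (hx : x ∈ Icc (-1) b) : Iop k0 (MLop k0 β f) x = MLop k0 β (Iop k0 f) x := by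
  have hIf : IntegrableOn (Iop k0 f) (Icc (-1) b) := (hk.continuousOn_Iop hf).integrableOn_Icc
  calc Iop k0 (MLop k0 β f) x
      = Iop k0 (fun y => f y + β * MLop k0 β (Iop k0 f) y) x :=
        Iop_congr (fun y hy => hk.MLop_eq_add hf β ⟨hy.1, hy.2.trans hx.2⟩) hx.1
    _ = Iop k0 f x + β * Iop k0 (MLop k0 β (Iop k0 f)) x :=
        hk.Iop_add_const_mul hf (hk.continuousOn_MLop_Iop hf β).integrableOn_Icc β hx
    _ = Iop k0 f x + β * MLop k0 β (Iop k0 (Iop k0 f)) x := by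
        rw [hk.Iop_MLop_of_abs_le hIf (fun y hy => hk.abs_Iop_le_L1 hf hy) β hx]
    _ = MLop k0 β (Iop k0 f) x := (hk.MLop_eq_add hIf β hx).symm

end IsVolterraKernel

section Laplace

open ProbabilityTheory
open scoped Convolution

lemma eqOn_complexMGF_of_mgf_eqOn {Ω Ω' : Type*} {mΩ : MeasurableSpace Ω}
    {mΩ' : MeasurableSpace Ω'} {μ : Measure Ω} {ν : Measure Ω'} {X : Ω → ℝ} {Y : Ω' → ℝ}
    {s : Set ℝ} (hs : IsOpen s) (hconv : Convex ℝ s) (hμ : s ⊆ integrableExpSet X μ)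
    (hν : s ⊆ integrableExpSet Y ν) (h : EqOn (mgf X μ) (mgf Y ν) s) :
    EqOn (complexMGF X μ) (complexMGF Y ν) (Complex.reLm ⁻¹' s) := by
  rcases s.eq_empty_or_nonempty with rfl | ⟨c, hc⟩
  · simp
  refine AnalyticOnNhd.eqOn_of_preconnected_of_frequently_eq
    (analyticOnNhd_complexMGF.mono fun z hz => interior_maximal hμ hs hz)
    (analyticOnNhd_complexMGF.mono fun z hz => interior_maximal hν hs hz)
    (hconv.linear_preimage Complex.reLm).isPreconnected (z₀ := (c : ℂ)) (by simpa using hc) ?_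
  have hreal : ∃ᶠ x : ℝ in 𝓝[≠] c, complexMGF X μ x = complexMGF Y ν x := by
    refine Eventually.frequently ?_
    filter_upwards [nhdsWithin_le_nhds (hs.mem_nhds hc)] with x hx
    rw [complexMGF_ofReal, complexMGF_ofReal, h hx]
  refine Tendsto.frequently (tendsto_nhdsWithin_iff.2 ⟨?_, ?_⟩) hreal
  · exact (Complex.continuous_ofReal.tendsto c).mono_left nhdsWithin_le_nhds
  · filter_upwards [self_mem_nhdsWithin] with x hx
    simpa using hx

/-- The measure `exp (c x) μ(dx)`. Unlike `Measure.tilted` it is not normalised, so that `μ` may be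
infinite and can be recovered from it. -/
def expTilt (μ : Measure ℝ) (c : ℝ) : Measure ℝ :=
  μ.withDensity fun x => ENNReal.ofReal (Real.exp (c * x))

lemma charFun_expTilt (μ : Measure ℝ) (c t : ℝ) :
    charFun (expTilt μ c) t = complexMGF id μ (c + t * Complex.I) := by
  rw [charFun_apply_real, expTilt, integral_withDensity_eq_integral_toReal_smul (by fun_prop)
    (ae_of_all _ fun _ => ENNReal.ofReal_lt_top), complexMGF]
  refine integral_congr_ae (ae_of_all _ fun x => ?_)
  simp only [ENNReal.toReal_ofReal (Real.exp_pos _).le, Complex.real_smul, Complex.ofReal_exp,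
    id, ← Complex.exp_add]
  push_cast
  ring_nf

lemma expTilt_injective (c : ℝ) : Function.Injective fun μ => expTilt μ c := by
  intro μ ν h
  have hinv (ρ : Measure ℝ) :
      (expTilt ρ c).withDensity (fun x => ENNReal.ofReal (Real.exp (c * x)))⁻¹ = ρ :=
    withDensity_inv_same (by fun_prop)
      (ae_of_all _ fun x => (ENNReal.ofReal_pos.2 (Real.exp_pos _)).ne')
      (ae_of_all _ fun x => ENNReal.ofReal_ne_top)
  rw [← hinv μ, show expTilt μ c = expTilt ν c from h, hinv]

lemma isFiniteMeasure_expTilt {μ : Measure ℝ} {c : ℝ} (hc : c ∈ integrableExpSet id μ) :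
    IsFiniteMeasure (expTilt μ c) :=
  isFiniteMeasure_withDensity_ofReal (Integrable.hasFiniteIntegral hc)

lemma measure_ext_of_mgf_eqOn {μ ν : Measure ℝ} {s : Set ℝ} (hs : IsOpen s)
    (hconv : Convex ℝ s) (hne : s.Nonempty) (hμ : s ⊆ integrableExpSet id μ)
    (hν : s ⊆ integrableExpSet id ν) (h : EqOn (mgf id μ) (mgf id ν) s) : μ = ν := by
  obtain ⟨c, hc⟩ := hne
  have := isFiniteMeasure_expTilt (hμ hc)
  have := isFiniteMeasure_expTilt (hν hc)
  refine expTilt_injective c (Measure.ext_of_charFun (funext fun t => ?_))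
  rw [charFun_expTilt, charFun_expTilt]
  exact eqOn_complexMGF_of_mgf_eqOn hs hconv hμ hν h (by simpa using hc)

lemma mgf_conv (μ ν : Measure ℝ) [SFinite μ] [SFinite ν] (t : ℝ) :
    mgf id (μ ∗ ν) t = mgf id μ t * mgf id ν t := by
  rw [mgf, Measure.conv, integral_map (by fun_prop) (by fun_prop)]
  simp only [id, mul_add, Real.exp_add]
  exact integral_prod_mul (fun x => Real.exp (t * x)) fun x => Real.exp (t * x)

lemma mem_integrableExpSet_conv {μ ν : Measure ℝ} [SFinite μ] [SFinite ν] {t : ℝ}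
    (hμ : t ∈ integrableExpSet id μ) (hν : t ∈ integrableExpSet id ν) :
    t ∈ integrableExpSet id (μ ∗ ν) := by
  rw [integrableExpSet, mem_ofPred_eq, Measure.conv,
    integrable_map_measure (by fun_prop) (by fun_prop)]
  simp only [Function.comp_def, id, mul_add, Real.exp_add]
  exact Integrable.mul_prod hμ hν

/-- The Laplace transform `∫_0^∞ e^{-s x} P(x) dx` at a real point `s`. -/
def laplace (P : ℝ → ℝ) (s : ℝ) : ℝ := ∫ x in Ioi 0, Real.exp (-s * x) * P x

/-- A nonnegative kernel on the half-line, extended by zero to the whole line, whose Laplace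
transform is finite on `(0, ∞)`. -/
structure IsLaplaceKernel (P : ℝ → ℝ) : Prop where
  eq_zero : ∀ x < 0, P x = 0
  nonneg : ∀ x, 0 ≤ P x
  integrableOn : ∀ s, 0 < s → IntegrableOn (fun x => Real.exp (-s * x) * P x) (Ioi 0)

/-- The measure `P(x) dx`. -/
def densityMeasure (P : ℝ → ℝ) : Measure ℝ := volume.withDensity fun x => ENNReal.ofReal (P x)

instance (P : ℝ → ℝ) : SFinite (densityMeasure P) := by
  unfold densityMeasure; infer_instance

namespace IsLaplaceKernel

variable {P Q R H : ℝ → ℝ} {s : ℝ}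

lemma indicator_Ioi_ae_eq (hP : IsLaplaceKernel P) (s : ℝ) :
    (Ioi 0).indicator (fun x => Real.exp (-s * x) * P x) =ᵐ[volume]
      fun x => Real.exp (-s * x) * P x := by
  filter_upwards [compl_mem_ae_iff.2 (measure_singleton (0 : ℝ))] with x hx
  rcases lt_or_gt_of_ne hx with h | h
  · rw [indicator_of_notMem (notMem_Ioi.2 h.le), hP.eq_zero x h, mul_zero]
  · rw [indicator_of_mem (mem_Ioi.2 h)]

lemma integrable (hP : IsLaplaceKernel P) (hs : 0 < s) :
    Integrable fun x => Real.exp (-s * x) * P x :=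
  ((integrable_indicator_iff measurableSet_Ioi).2 (hP.integrableOn s hs)).congr
    (hP.indicator_Ioi_ae_eq s)

lemma integral_eq_laplace (hP : IsLaplaceKernel P) (s : ℝ) :
    ∫ x, Real.exp (-s * x) * P x = laplace P s := by
  rw [laplace, ← integral_indicator measurableSet_Ioi]
  exact (integral_congr_ae (hP.indicator_Ioi_ae_eq s)).symm

lemma aestronglyMeasurable (hP : IsLaplaceKernel P) : AEStronglyMeasurable P volume := by
  refine ((Continuous.aestronglyMeasurable (f := Real.exp) (by fun_prop)).mul
    (hP.integrable one_pos).aestronglyMeasurable).congr (ae_of_all _ fun x => ?_)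
  rw [Pi.mul_apply, ← mul_assoc, ← Real.exp_add]
  simp

lemma integrableOn_Iic (hP : IsLaplaceKernel P) (a : ℝ) : IntegrableOn P (Iic a) := by
  refine ((hP.integrable one_pos).const_mul (Real.exp a)).integrableOn.mono'
    hP.aestronglyMeasurable.restrict ?_
  filter_upwards [ae_restrict_mem measurableSet_Iic] with x hx
  rw [Real.norm_of_nonneg (hP.nonneg x), ← mul_assoc, ← Real.exp_add]
  refine le_mul_of_one_le_left (hP.nonneg x) (Real.one_le_exp ?_)
  linarith [mem_Iic.1 hx]

lemma integrable_densityMeasure_iff (hP : IsLaplaceKernel P) (F : ℝ → ℝ) :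
    Integrable F (densityMeasure P) ↔ Integrable fun x => P x * F x := by
  rw [densityMeasure, integrable_withDensity_iff_integrable_smul₀'
    hP.aestronglyMeasurable.aemeasurable.ennreal_ofReal
    (ae_of_all _ fun _ => ENNReal.ofReal_lt_top)]
  simp only [ENNReal.toReal_ofReal (hP.nonneg _), smul_eq_mul]

lemma integral_densityMeasure (hP : IsLaplaceKernel P) (F : ℝ → ℝ) :
    ∫ x, F x ∂(densityMeasure P) = ∫ x, P x * F x := by
  rw [densityMeasure, integral_withDensity_eq_integral_toReal_smul₀
    hP.aestronglyMeasurable.aemeasurable.ennreal_ofReal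
    (ae_of_all _ fun _ => ENNReal.ofReal_lt_top)]
  simp only [ENNReal.toReal_ofReal (hP.nonneg _), smul_eq_mul]

lemma Iio_subset_integrableExpSet (hP : IsLaplaceKernel P) :
    Iio 0 ⊆ integrableExpSet id (densityMeasure P) := by
  intro t ht
  rw [integrableExpSet, mem_ofPred_eq, hP.integrable_densityMeasure_iff]
  simpa only [neg_neg, mul_comm, id] using hP.integrable (neg_pos.2 ht)

lemma mgf_densityMeasure (hP : IsLaplaceKernel P) (t : ℝ) :
    mgf id (densityMeasure P) t = laplace P (-t) := by
  rw [mgf, hP.integral_densityMeasure, ← hP.integral_eq_laplace]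
  simp only [neg_neg, mul_comm, id]

lemma densityMeasure_conv (hP : IsLaplaceKernel P) (hQ : IsLaplaceKernel Q)
    (hR : IsLaplaceKernel R) (h : ∀ s, 0 < s → laplace P s * laplace Q s = laplace R s) :
    densityMeasure P ∗ densityMeasure Q = densityMeasure R := by
  refine measure_ext_of_mgf_eqOn isOpen_Iio (convex_Iio 0) nonempty_Iio (fun t ht => ?_)
    hR.Iio_subset_integrableExpSet fun t ht => ?_
  · exact mem_integrableExpSet_conv (hP.Iio_subset_integrableExpSet ht)
      (hQ.Iio_subset_integrableExpSet ht)
  · rw [mgf_conv, hP.mgf_densityMeasure, hQ.mgf_densityMeasure, hR.mgf_densityMeasure,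
      h _ (neg_pos.2 ht)]

lemma convolution_convolution (hP : IsLaplaceKernel P) (hQ : IsLaplaceKernel Q)
    (hR : IsLaplaceKernel R) (h : ∀ s, 0 < s → laplace P s * laplace Q s = laplace R s) {z : ℝ}
    (hH : Integrable fun t => R t * H (z - t)) : (P ⋆ (Q ⋆ H)) z = (R ⋆ H) z := by
  have hint := (hR.integrable_densityMeasure_iff fun t => H (z - t)).2 hH
  simp only [convolution_lsmul, smul_eq_mul]
  calc ∫ y, P y * ∫ u, Q u * H (z - y - u)
      = ∫ y, ∫ u, H (z - (y + u)) ∂(densityMeasure Q) ∂(densityMeasure P) := by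
        rw [hP.integral_densityMeasure]
        simp only [hQ.integral_densityMeasure, sub_sub]
    _ = ∫ t, H (z - t) ∂(densityMeasure P ∗ densityMeasure Q) := by
        rw [← hP.densityMeasure_conv hQ hR h] at hint
        exact (integral_conv hint).symm
    _ = ∫ t, R t * H (z - t) := by
        rw [hP.densityMeasure_conv hQ hR h, hR.integral_densityMeasure]

end IsLaplaceKernel

/-- The Heaviside function, the unit of the calculus of Sonine pairs. -/
def heaviside : ℝ → ℝ := (Ici 0).indicator 1

lemma heaviside_mul_exp_eqOn (s : ℝ) :
    EqOn (fun x => Real.exp (-s * x) * heaviside x) (fun x => Real.exp (-s * x)) (Ioi 0) :=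
  fun x hx => by simp only [heaviside, indicator_of_mem (Ioi_subset_Ici_self hx), Pi.one_apply,
    mul_one]

lemma isLaplaceKernel_heaviside : IsLaplaceKernel heaviside where
  eq_zero _ hx := indicator_of_notMem (notMem_Ici.2 hx) _
  nonneg _ := indicator_nonneg (fun _ _ => zero_le_one) _
  integrableOn s hs := (integrableOn_exp_mul_Ioi (neg_lt_zero.2 hs) 0).congr_fun
    (heaviside_mul_exp_eqOn s).symm measurableSet_Ioi

lemma laplace_heaviside {s : ℝ} (hs : 0 < s) : laplace heaviside s = s⁻¹ := by
  rw [laplace, setIntegral_congr_fun measurableSet_Ioi (heaviside_mul_exp_eqOn s),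
    integral_exp_mul_Ioi (neg_lt_zero.2 hs)]
  simp

lemma heaviside_convolution (H : ℝ → ℝ) (z : ℝ) : (heaviside ⋆ H) z = ∫ t in Iic z, H t := by
  rw [convolution_lsmul_swap, ← integral_indicator measurableSet_Iic]
  refine integral_congr_ae (ae_of_all _ fun t => ?_)
  simp only [heaviside, indicator, mem_Ici, sub_nonneg, mem_Iic, Pi.one_apply, ite_smul, one_smul,
    zero_smul]

/-- A Sonine pair: two kernels on the half-line whose convolution is the Heaviside function,
expressed through their Laplace transforms. -/
structure IsSoninePair (P Q : ℝ → ℝ) : Prop where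
  left : IsLaplaceKernel P
  right : IsLaplaceKernel Q
  laplace_mul : ∀ s, 0 < s → laplace P s * laplace Q s = s⁻¹

lemma IsSoninePair.convolution_convolution {P Q H : ℝ → ℝ} (hPQ : IsSoninePair P Q)
    (hH : Integrable H) (z : ℝ) : (P ⋆ (Q ⋆ H)) z = ∫ t in Iic z, H t := by
  rw [← heaviside_convolution]
  refine hPQ.left.convolution_convolution hPQ.right isLaplaceKernel_heaviside
    (fun s hs => by rw [hPQ.laplace_mul s hs, laplace_heaviside hs]) ?_
  refine (hH.comp_sub_left z).bdd_mul (c := 1)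
    isLaplaceKernel_heaviside.aestronglyMeasurable (ae_of_all _ fun t => ?_)
  exact (norm_indicator_le_norm_self 1 _).trans norm_one.le

end Laplace

section Convolution

open scoped Convolution

variable {P Q f h : ℝ → ℝ} {a b x : ℝ}

lemma integrable_kernel_sub_mul (hP : IntegrableOn P (Iic (b - a))) (hf : Integrable f)
    (hfa : ∀ y ≤ a, f y = 0) :
    Integrable (fun p : ℝ × ℝ => P (p.1 - p.2) * f p.2)
      ((volume.restrict (Iic b)).prod volume) := by
  have hint := (hf.convolution_integrand (ContinuousLinearMap.mul ℝ ℝ)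
    (hP.integrable_indicator measurableSet_Iic)).mono_measure
    (Measure.prod_mono (Measure.restrict_le_self (s := Iic b)) le_rfl)
  refine hint.congr ?_
  filter_upwards [Measure.quasiMeasurePreserving_fst.ae (ae_restrict_mem measurableSet_Iic)]
    with p hp
  rw [ContinuousLinearMap.mul_apply', mul_comm]
  rcases le_or_gt p.2 a with hpa | hpa
  · rw [hfa _ hpa, mul_zero, mul_zero]
  · rw [indicator_of_mem (mem_Iic.2 (by linarith [mem_Iic.1 hp]))]

lemma integrableOn_convolution (hP : IntegrableOn P (Iic (b - a))) (hf : Integrable f)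
    (hfa : ∀ y ≤ a, f y = 0) : IntegrableOn (P ⋆ f) (Iic b) := by
  refine (integrable_kernel_sub_mul hP hf hfa).integral_prod_left.congr (ae_of_all _ fun t => ?_)
  rw [convolution_lsmul_swap]
  rfl

lemma setIntegral_Iic_convolution (hP : IntegrableOn P (Iic (b - a))) (hf : Integrable f)
    (hfa : ∀ y ≤ a, f y = 0) :
    ∫ t in Iic b, (P ⋆ f) t = ∫ y, (∫ u in Iic (b - y), P u) * f y := by
  simp only [convolution_lsmul_swap, smul_eq_mul]
  rw [integral_integral_swap (integrable_kernel_sub_mul hP hf hfa)]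
  refine integral_congr_ae (ae_of_all _ fun y => ?_)
  dsimp only
  rw [integral_mul_const, ← integral_indicator measurableSet_Iic,
    ← integral_indicator measurableSet_Iic,
    ← integral_sub_right_eq_self ((Iic (b - y)).indicator P) y]
  simp only [indicator, mem_Iic, sub_le_sub_iff_right]

lemma convolution_eq_zero_of_le (hP : ∀ u < 0, P u = 0) (hfa : ∀ y ≤ a, f y = 0) (hx : x ≤ a) :
    (P ⋆ f) x = 0 := by
  simp only [convolution_lsmul, smul_eq_mul]
  refine integral_eq_zero_of_ae (ae_of_all _ fun u => ?_)
  rcases lt_or_ge u 0 with hu | hu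
  · simp only [hP u hu, zero_mul, Pi.zero_apply]
  · simp only [hfa (x - u) (by linarith), mul_zero, Pi.zero_apply]

lemma convolution_eq_intervalIntegral (hP : ∀ u < 0, P u = 0) (hfa : ∀ y ≤ a, f y = 0)
    (hx : a ≤ x) : (P ⋆ f) x = ∫ u in 0..x - a, P u * f (x - u) := by
  rw [intervalIntegral.integral_of_le (sub_nonneg.2 hx), ← integral_Icc_eq_integral_Ioc]
  simp only [convolution_lsmul, smul_eq_mul]
  refine (setIntegral_eq_integral_of_forall_compl_eq_zero fun u hu => ?_).symm
  rcases lt_or_ge u 0 with hu0 | hu0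
  · rw [hP u hu0, zero_mul]
  · rw [hfa (x - u) (by linarith [not_le.1 fun hle => hu ⟨hu0, hle⟩]), mul_zero]

lemma indicator_Ioc_eq_zero_of_le {y : ℝ} (hy : y ≤ a) : (Ioc a b).indicator h y = 0 :=
  indicator_of_notMem (fun hy' => hy'.1.not_ge hy) h

lemma setIntegral_Iic_indicator_Ioc (hx : x ∈ Icc a b) :
    ∫ t in Iic x, (Ioc a b).indicator h t = ∫ t in a..x, h t := by
  rw [setIntegral_indicator measurableSet_Ioc, Iic_inter_Ioc_of_le hx.2,
    intervalIntegral.integral_of_le hx.1]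

namespace IsLaplaceKernel

lemma integrableOn_convolution_indicator (hP : IsLaplaceKernel P) (hh : IntegrableOn h (Icc a b)) :
    IntegrableOn (P ⋆ (Ioc a b).indicator h) (Icc a b) :=
  (integrableOn_convolution (hP.integrableOn_Iic (b - a))
    ((hh.mono_set Ioc_subset_Icc_self).integrable_indicator measurableSet_Ioc)
    fun _ => indicator_Ioc_eq_zero_of_le).mono_set Icc_subset_Iic_self

lemma setIntegral_Iic_eq_zero (hP : IsLaplaceKernel P) (hx : x ≤ 0) : ∫ u in Iic x, P u = 0 := by
  rw [integral_Iic_eq_integral_Iio]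
  exact setIntegral_eq_zero_of_forall_eq_zero fun u hu => hP.eq_zero u (hu.trans_le hx)

lemma intervalIntegral_convolution_indicator (hP : IsLaplaceKernel P)
    (hh : IntegrableOn h (Icc a b)) (hx : x ∈ Icc a b) :
    ∫ t in a..x, (P ⋆ (Ioc a b).indicator h) t =
      ∫ y in a..x, (∫ u in Iic (x - y), P u) * h y := by
  calc ∫ t in a..x, (P ⋆ (Ioc a b).indicator h) t
      = ∫ t in Iic x, (P ⋆ (Ioc a b).indicator h) t := by
        rw [intervalIntegral.integral_of_le hx.1]
        refine (setIntegral_eq_of_subset_of_forall_sdiff_eq_zero measurableSet_Iic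
          Ioc_subset_Iic_self fun t ht => ?_).symm
        exact convolution_eq_zero_of_le hP.eq_zero (fun _ => indicator_Ioc_eq_zero_of_le)
          (not_lt.1 fun hat => ht.2 ⟨hat, ht.1⟩)
    _ = ∫ y, (∫ u in Iic (x - y), P u) * (Ioc a b).indicator h y :=
        setIntegral_Iic_convolution (hP.integrableOn_Iic (x - a))
          ((hh.mono_set Ioc_subset_Icc_self).integrable_indicator measurableSet_Ioc)
          fun _ => indicator_Ioc_eq_zero_of_le
    _ = ∫ y in Iic x, (∫ u in Iic (x - y), P u) * (Ioc a b).indicator h y := by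
        refine (setIntegral_eq_integral_of_forall_compl_eq_zero fun y hy => ?_).symm
        rw [hP.setIntegral_Iic_eq_zero (sub_nonpos.2 (not_le.1 hy).le), zero_mul]
    _ = ∫ y in a..x, (∫ u in Iic (x - y), P u) * h y := by
        simp_rw [← indicator_mul_right (Ioc a b) fun y => ∫ u in Iic (x - y), P u]
        exact setIntegral_Iic_indicator_Ioc hx

end IsLaplaceKernel

namespace IsSoninePair

lemma intervalIntegral_mul_indicator_convolution (hPQ : IsSoninePair P Q)
    (hh : IntegrableOn h (Icc a b)) (hx : x ∈ Icc a b) :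
    ∫ u in 0..x - a, P u * (Icc a b).indicator (Q ⋆ (Ioc a b).indicator h) (x - u) =
      ∫ t in a..x, h t := by
  calc ∫ u in 0..x - a, P u * (Icc a b).indicator (Q ⋆ (Ioc a b).indicator h) (x - u)
      = ∫ u in 0..x - a, P u * (Q ⋆ (Ioc a b).indicator h) (x - u) := by
        refine intervalIntegral.integral_congr fun u hu => ?_
        rw [uIcc_of_le (sub_nonneg.2 hx.1)] at hu
        simp only [indicator_of_mem
          (show x - u ∈ Icc a b from ⟨by linarith [hu.2], by linarith [hu.1, hx.2]⟩)]
    _ = (P ⋆ (Q ⋆ (Ioc a b).indicator h)) x :=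
        (convolution_eq_intervalIntegral hPQ.left.eq_zero (fun _ =>
          convolution_eq_zero_of_le hPQ.right.eq_zero fun _ => indicator_Ioc_eq_zero_of_le)
          hx.1).symm
    _ = ∫ t in Iic x, (Ioc a b).indicator h t :=
        hPQ.convolution_convolution
          ((hh.mono_set Ioc_subset_Icc_self).integrable_indicator measurableSet_Ioc) x
    _ = ∫ t in a..x, h t := setIntegral_Iic_indicator_Ioc hx

lemma ae_deriv_eq (hPQ : IsSoninePair P Q) (hh : IntegrableOn h (Icc a b)) :
    ∀ᵐ x ∂(volume.restrict (Ioo a b)),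
      deriv (fun z => ∫ u in 0..z - a,
        P u * (Icc a b).indicator (Q ⋆ (Ioc a b).indicator h) (z - u)) x = h x := by
  rw [ae_restrict_iff' measurableSet_Ioo]
  rcases lt_or_ge b a with hab | hab
  · simp [Ioo_eq_empty hab.not_gt]
  have hint : IntervalIntegrable h volume a b :=
    (intervalIntegrable_iff_integrableOn_Icc_of_le hab).2 hh
  filter_upwards [hint.ae_hasDerivAt_integral] with x hx hxab
  rw [uIcc_of_le hab] at hx
  refine ((hx (Ioo_subset_Icc_self hxab) a (left_mem_Icc.2 hab)).congr_of_eventuallyEq ?_).deriv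
  filter_upwards [isOpen_Ioo.mem_nhds hxab] with z hz
  exact hPQ.intervalIntegral_mul_indicator_convolution hh (Ioo_subset_Icc_self hz)

end IsSoninePair

end Convolution

section LevyMeasure

variable {φ : Measure ℝ} {s x : ℝ}

/-- The function `Φ` with values in `[0, ∞]`, which avoids the junk value of `PhiFn` where the
Bochner integral diverges. -/
def tailLIntegral (φ : Measure ℝ) (x : ℝ) : ENNReal := ∫⁻ y in Ioi x, φ (Ioi y)

lemma measurable_measure_Ioi (φ : Measure ℝ) : Measurable fun y => φ (Ioi y) :=
  Antitone.measurable fun _ _ h => measure_mono (Ioi_subset_Ioi h)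

lemma antitone_tailLIntegral (φ : Measure ℝ) : Antitone (tailLIntegral φ) :=
  fun _ _ h => lintegral_mono_set (Ioi_subset_Ioi h)

lemma lintegral_Ioi_mul_lintegral_Ioi {F G : ℝ → ENNReal} (hF : Measurable F)
    (hG : Measurable G) (a : ℝ) :
    ∫⁻ x in Ioi a, G x * ∫⁻ y in Ioi x, F y = ∫⁻ y in Ioi a, F y * ∫⁻ x in Ioo a y, G x := by
  have hmeas : Measurable (Function.uncurry fun x y : ℝ =>
      {p : ℝ × ℝ | p.1 < p.2}.indicator (fun p => G p.1 * F p.2) (x, y)) :=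
    Measurable.indicator (by fun_prop) (measurableSet_lt measurable_fst measurable_snd)
  calc ∫⁻ x in Ioi a, G x * ∫⁻ y in Ioi x, F y
      = ∫⁻ x in Ioi a, ∫⁻ y in Ioi a,
          {p : ℝ × ℝ | p.1 < p.2}.indicator (fun p => G p.1 * F p.2) (x, y) := by
        refine setLIntegral_congr_fun measurableSet_Ioi fun x hx => ?_
        rw [← lintegral_const_mul _ hF, ← inter_eq_left.2 (Ioi_subset_Ioi (mem_Ioi.1 hx).le),
          ← Measure.restrict_restrict measurableSet_Ioi, ← lintegral_indicator measurableSet_Ioi]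
        rfl
    _ = ∫⁻ y in Ioi a, ∫⁻ x in Ioi a,
          {p : ℝ × ℝ | p.1 < p.2}.indicator (fun p => G p.1 * F p.2) (x, y) :=
        lintegral_lintegral_swap hmeas.aemeasurable
    _ = ∫⁻ y in Ioi a, F y * ∫⁻ x in Ioo a y, G x := by
        refine lintegral_congr fun y => ?_
        rw [← lintegral_const_mul _ hG, ← Iio_inter_Ioi,
          ← Measure.restrict_restrict measurableSet_Iio, ← lintegral_indicator measurableSet_Iio]
        simp only [mul_comm (F y)]
        rfl

lemma lintegral_mul_tailLIntegral (φ : Measure ℝ) {g : ℝ → ℝ} (hg : Continuous g)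
    (hg0 : ∀ x, 0 ≤ g x) :
    ∫⁻ x in Ioi 0, ENNReal.ofReal (g x) * tailLIntegral φ x =
      ∫⁻ z in Ioi 0, ENNReal.ofReal (∫ t in 0..z, ∫ x in 0..t, g x) ∂φ := by
  have hprim : Continuous fun t => ∫ x in 0..t, g x :=
    intervalIntegral.continuous_primitive (fun _ _ => hg.intervalIntegrable _ _) 0
  rw [lintegral_comp_eq_lintegral_meas_lt_mul (φ.restrict (Ioi 0)) (f := fun z => z)
    ((ae_restrict_mem measurableSet_Ioi).mono fun z hz => (mem_Ioi.1 hz).le) aemeasurable_id'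
    (fun t _ => hprim.intervalIntegrable 0 t)
    ((ae_restrict_mem measurableSet_Ioi).mono fun t ht =>
      intervalIntegral.integral_nonneg (mem_Ioi.1 ht).le fun x _ => hg0 x)]
  simp only [tailLIntegral]
  rw [lintegral_Ioi_mul_lintegral_Ioi (measurable_measure_Ioi φ) hg.measurable.ennreal_ofReal]
  refine setLIntegral_congr_fun measurableSet_Ioi fun y hy => ?_
  congr 1
  · rw [show {z : ℝ | y < z} = Ioi y from rfl, Measure.restrict_apply measurableSet_Ioi,
      inter_eq_left.2 (Ioi_subset_Ioi (mem_Ioi.1 hy).le)]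
  · rw [intervalIntegral.integral_of_le (mem_Ioi.1 hy).le, integral_Ioc_eq_integral_Ioo,
      ofReal_integral_eq_lintegral_ofReal (hg.integrableOn_Icc.mono_set Ioo_subset_Icc_self)
        (ae_of_all _ hg0)]

lemma integral_integral_exp_neg_mul (hs : s ≠ 0) (z : ℝ) :
    ∫ t in 0..z, ∫ x in 0..t, Real.exp (-s * x) = (Real.exp (-s * z) - 1 + s * z) / s ^ 2 := by
  have hexp (t : ℝ) : ∫ x in 0..t, Real.exp (-s * x) = s⁻¹ - s⁻¹ * Real.exp (-s * t) := by
    rw [intervalIntegral.integral_comp_mul_left _ (neg_ne_zero.2 hs), integral_exp, mul_zero,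
      Real.exp_zero, smul_eq_mul, inv_neg]
    ring
  simp only [hexp]
  rw [intervalIntegral.integral_sub intervalIntegrable_const
    (Continuous.intervalIntegrable (by fun_prop) _ _), intervalIntegral.integral_const,
    intervalIntegral.integral_const_mul, hexp, smul_eq_mul]
  field_simp
  ring

lemma exp_neg_sub_one_add_le_sq {u : ℝ} (hu : 0 ≤ u) : Real.exp (-u) - 1 + u ≤ u ^ 2 := by
  rcases le_total u 1 with hu1 | hu1
  · have hquad := le_of_abs_le
      (Real.abs_exp_sub_one_sub_id_le (x := -u) (by rwa [abs_neg, abs_of_nonneg hu]))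
    linarith [neg_sq u]
  · nlinarith [Real.exp_le_one_iff.2 (neg_nonpos.2 hu)]

lemma exp_neg_mul_sub_one_add_div_sq_le {z : ℝ} (hs : 0 < s) (hz : 0 ≤ z) :
    (Real.exp (-s * z) - 1 + s * z) / s ^ 2 ≤ (1 + s⁻¹) * min (z ^ 2) z := by
  have hu : 0 ≤ s * z := by positivity
  have hsq := exp_neg_sub_one_add_le_sq hu
  have hlin : Real.exp (-(s * z)) - 1 + s * z ≤ s * z := by
    linarith [Real.exp_le_one_iff.2 (neg_nonpos.2 hu)]
  rw [neg_mul, div_le_iff₀ (by positivity)]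
  rcases min_cases (z ^ 2) z with ⟨hmin, -⟩ | ⟨hmin, -⟩ <;> rw [hmin]
  · refine hsq.trans ?_
    field_simp
    nlinarith [sq_nonneg z]
  · refine hlin.trans ?_
    field_simp
    nlinarith [sq_nonneg s]

lemma exp_neg_mul_sub_one_add_div_sq_pos {z : ℝ} (hs : s ≠ 0) (hz : z ≠ 0) :
    0 < (Real.exp (-s * z) - 1 + s * z) / s ^ 2 := by
  have := Real.add_one_lt_exp (mul_ne_zero (neg_ne_zero.2 hs) hz)
  exact div_pos (by linarith) (by positivity)

lemma lintegral_exp_mul_tailLIntegral (φ : Measure ℝ) (hs : s ≠ 0) :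
    ∫⁻ x in Ioi 0, ENNReal.ofReal (Real.exp (-s * x)) * tailLIntegral φ x =
      ∫⁻ z in Ioi 0, ENNReal.ofReal ((Real.exp (-s * z) - 1 + s * z) / s ^ 2) ∂φ := by
  rw [lintegral_mul_tailLIntegral φ (by fun_prop) fun _ => (Real.exp_pos _).le]
  simp only [integral_integral_exp_neg_mul hs]

lemma lintegral_exp_mul_tailLIntegral_lt_top
    (hφ : ∫⁻ z in Ioi 0, ENNReal.ofReal (min (z ^ 2) z) ∂φ < ⊤) (hs : 0 < s) :
    ∫⁻ x in Ioi 0, ENNReal.ofReal (Real.exp (-s * x)) * tailLIntegral φ x < ⊤ := by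
  rw [lintegral_exp_mul_tailLIntegral φ hs.ne']
  calc ∫⁻ z in Ioi 0, ENNReal.ofReal ((Real.exp (-s * z) - 1 + s * z) / s ^ 2) ∂φ
      ≤ ∫⁻ z in Ioi 0, ENNReal.ofReal (1 + s⁻¹) * ENNReal.ofReal (min (z ^ 2) z) ∂φ := by
        refine setLIntegral_mono' measurableSet_Ioi fun z hz => ?_
        rw [← ENNReal.ofReal_mul (by positivity)]
        exact ENNReal.ofReal_le_ofReal (exp_neg_mul_sub_one_add_div_sq_le hs (mem_Ioi.1 hz).le)
    _ = ENNReal.ofReal (1 + s⁻¹) * ∫⁻ z in Ioi 0, ENNReal.ofReal (min (z ^ 2) z) ∂φ :=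
        lintegral_const_mul _ (by fun_prop)
    _ < ⊤ := ENNReal.mul_lt_top ENNReal.ofReal_lt_top hφ

lemma lintegral_exp_mul_tailLIntegral_pos (hφ : φ (Ioi 0) ≠ 0) (hs : s ≠ 0) :
    0 < ∫⁻ x in Ioi 0, ENNReal.ofReal (Real.exp (-s * x)) * tailLIntegral φ x := by
  rw [lintegral_exp_mul_tailLIntegral φ hs, setLIntegral_pos_iff (by fun_prop)]
  refine (pos_iff_ne_zero.2 hφ).trans_le (measure_mono fun z hz => ⟨?_, hz⟩)
  exact (ENNReal.ofReal_pos.2 (exp_neg_mul_sub_one_add_div_sq_pos hs (mem_Ioi.1 hz).ne')).ne'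

lemma tailLIntegral_lt_top (hφ : ∫⁻ z in Ioi 0, ENNReal.ofReal (min (z ^ 2) z) ∂φ < ⊤)
    (hx : 0 < x) : tailLIntegral φ x < ⊤ := by
  have hae : ∀ᵐ y ∂(volume.restrict (Ioo 0 x)),
      ENNReal.ofReal (Real.exp (-1 * y)) * tailLIntegral φ y < ⊤ :=
    ae_restrict_of_ae_restrict_of_subset Ioo_subset_Ioi_self
      (ae_lt_top (Measurable.mul (by fun_prop) (antitone_tailLIntegral φ).measurable)
        (lintegral_exp_mul_tailLIntegral_lt_top hφ one_pos).ne)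
  have : NeBot (ae (volume.restrict (Ioo 0 x))) := ae_neBot.2 (by simpa)
  obtain ⟨y, hy, hyx⟩ := (hae.and (ae_restrict_mem measurableSet_Ioo)).exists
  refine (antitone_tailLIntegral φ hyx.2.le).trans_lt ?_
  exact ENNReal.lt_top_of_mul_ne_top_right hy.ne (ENNReal.ofReal_pos.2 (Real.exp_pos _)).ne'

lemma PhiFn_eq_toReal (hφ : ∫⁻ z in Ioi 0, ENNReal.ofReal (min (z ^ 2) z) ∂φ < ⊤)
    (hx : 0 < x) : PhiFn φ x = (tailLIntegral φ x).toReal := by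
  rw [PhiFn, if_pos hx, tailLIntegral]
  exact integral_toReal (measurable_measure_Ioi φ).aemeasurable
    (ae_lt_top (measurable_measure_Ioi φ) (tailLIntegral_lt_top hφ hx).ne)

lemma PhiFn_nonneg (φ : Measure ℝ) (x : ℝ) : 0 ≤ PhiFn φ x := by
  rw [PhiFn]
  split_ifs
  · exact integral_nonneg fun _ => ENNReal.toReal_nonneg
  · exact le_rfl

lemma isLaplaceKernel_PhiFn (hφ : ∫⁻ z in Ioi 0, ENNReal.ofReal (min (z ^ 2) z) ∂φ < ⊤) :
    IsLaplaceKernel (PhiFn φ) where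
  eq_zero x hx := if_neg hx.not_gt
  nonneg := PhiFn_nonneg φ
  integrableOn s hs := by
    refine (integrable_toReal_of_lintegral_ne_top
      (Measurable.aemeasurable (Measurable.mul (by fun_prop) (antitone_tailLIntegral φ).measurable))
      (lintegral_exp_mul_tailLIntegral_lt_top hφ hs).ne).congr ?_
    filter_upwards [ae_restrict_mem measurableSet_Ioi] with x hx
    rw [Pi.mul_apply, ENNReal.toReal_mul, ENNReal.toReal_ofReal (Real.exp_pos _).le,
      PhiFn_eq_toReal hφ hx]

lemma ofReal_laplace_PhiFn (hφ : ∫⁻ z in Ioi 0, ENNReal.ofReal (min (z ^ 2) z) ∂φ < ⊤)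
    (hs : 0 < s) : ENNReal.ofReal (laplace (PhiFn φ) s) =
      ∫⁻ x in Ioi 0, ENNReal.ofReal (Real.exp (-s * x)) * tailLIntegral φ x := by
  rw [laplace, ofReal_integral_eq_lintegral_ofReal
    ((isLaplaceKernel_PhiFn hφ).integrableOn s hs)
    (ae_of_all _ fun x => mul_nonneg (Real.exp_pos _).le (PhiFn_nonneg φ x))]
  refine setLIntegral_congr_fun measurableSet_Ioi fun x hx => ?_
  rw [ENNReal.ofReal_mul (Real.exp_pos _).le, PhiFn_eq_toReal hφ hx,
    ENNReal.ofReal_toReal (tailLIntegral_lt_top hφ hx).ne]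

lemma laplace_PhiFn_pos (hφ : ∫⁻ z in Ioi 0, ENNReal.ofReal (min (z ^ 2) z) ∂φ < ⊤)
    (hφ0 : φ (Ioi 0) ≠ 0) (hs : 0 < s) : 0 < laplace (PhiFn φ) s := by
  rw [← ENNReal.ofReal_pos, ofReal_laplace_PhiFn hφ hs]
  exact lintegral_exp_mul_tailLIntegral_pos hφ0 hs.ne'

lemma H0.measure_Ioi_ne_zero (h : H0 φ) : φ (Ioi 0) ≠ 0 := fun h0 => by
  simpa [Measure.restrict_eq_zero.2 (measure_mono_null Ioo_subset_Ioi_self h0)] using h.2.2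

lemma integral_cexp_mul_ofReal (P : ℝ → ℝ) (s : ℝ) :
    ∫ x in Ioi (0 : ℝ), Complex.exp (-s * x) * P x = laplace P s := by
  rw [laplace, ← integral_complex_ofReal]
  push_cast
  rfl

lemma psiFn_ofReal (φ : Measure ℝ) (s : ℝ) : psiFn φ s = s ^ 2 * laplace (PhiFn φ) s := by
  rw [psiFn, integral_cexp_mul_ofReal]

end LevyMeasure

section ScaleKernel

open scoped Convolution

variable {φ : Measure ℝ} {k h : ℝ → ℝ} {b s x : ℝ}

lemma IsScaleKernel.isLaplaceKernel (hk : IsScaleKernel φ k) :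
    IsLaplaceKernel fun y => k (y - 1) where
  eq_zero y hy := hk.1 _ (by linarith)
  nonneg y := (lt_or_ge (y - 1) (-1)).elim (fun hy => (hk.1 _ hy).ge) (hk.2.1 _)
  integrableOn s hs := by
    refine ((hk.2.2.2.2.2 s (by simpa using hs)).1).re.congr (ae_of_all _ fun y => ?_)
    dsimp only
    rw [← Complex.ofReal_neg, ← Complex.ofReal_mul, ← Complex.ofReal_exp, ← Complex.ofReal_mul]
    rfl

lemma IsScaleKernel.laplace_eq (hk : IsScaleKernel φ k) (hs : 0 < s) :
    laplace (fun y => k (y - 1)) s = s / (s ^ 2 * laplace (PhiFn φ) s) := by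
  have htransform := (hk.2.2.2.2.2 s (by simpa using hs)).2
  rw [integral_cexp_mul_ofReal fun y => k (y - 1), psiFn_ofReal] at htransform
  exact_mod_cast htransform

lemma H0.isSoninePair (h : H0 φ) (hk : IsScaleKernel φ k) :
    IsSoninePair (PhiFn φ) fun y => k (y - 1) where
  left := isLaplaceKernel_PhiFn h.2.1
  right := hk.isLaplaceKernel
  laplace_mul s hs := by
    have hpos := laplace_PhiFn_pos h.2.1 h.measure_Ioi_ne_zero hs
    rw [hk.laplace_eq hs]
    field_simp

lemma kIter_one_eq_setIntegral (k : ℝ → ℝ) (x : ℝ) :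
    kIter k 1 x = ∫ u in Iic (x + 1), k (u - 1) := by
  rw [show kIter k 1 x = ∫ y in Iic x, k y from rfl, ← integral_indicator measurableSet_Iic,
    ← integral_indicator measurableSet_Iic, ← integral_sub_right_eq_self ((Iic x).indicator k) 1]
  simp only [indicator, mem_Iic, sub_le_iff_le_add]

namespace IsLaplaceKernel

lemma isVolterraKernel_kIter_one (hk : IsLaplaceKernel fun y => k (y - 1)) (b : ℝ) :
    IsVolterraKernel (kIter k 1) b (kIter k 1 b) where
  continuous := by
    have hcont : Continuous fun z => ∫ u in Iic z, k (u - 1) :=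
      continuous_iff_continuousAt.2 fun z =>
        ((hk.integrableOn_Iic (z + 1)).continuousOn_Iic_primitive_Iic).continuousAt
          (Iic_mem_nhds (lt_add_one z))
    rw [funext (kIter_one_eq_setIntegral k)]
    exact hcont.comp (continuous_add_const 1)
  eq_zero x hx := by
    rw [kIter_one_eq_setIntegral]
    exact hk.setIntegral_Iic_eq_zero (by linarith)
  abs_le x hx := by
    rw [kIter_one_eq_setIntegral, kIter_one_eq_setIntegral,
      abs_of_nonneg (integral_nonneg fun u => hk.nonneg u)]
    exact setIntegral_mono_set (hk.integrableOn_Iic _) (ae_of_all _ hk.nonneg)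
      (Iic_subset_Iic.2 (by linarith)).eventuallyLE

lemma Iop_kIter_one_eq_integral (hk : IsLaplaceKernel fun y => k (y - 1))
    (hh : IntegrableOn h (Icc (-1) b)) (hx : x ∈ Icc (-1) b) :
    Iop (kIter k 1) h x =
      ∫ t in -1..x, ((fun y => k (y - 1)) ⋆ (Ioc (-1) b).indicator h) t := by
  rw [hk.intervalIntegral_convolution_indicator hh hx, Iop]
  simp only [kIter_one_eq_setIntegral, sub_add_cancel]

end IsLaplaceKernel

end ScaleKernel

theorem mittagLeffler_operator_general (φ : Measure ℝ) (hH0 : H0 φ) (k : ℝ → ℝ)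
    (hk : IsScaleKernel φ k) (β : ℝ) :
    (∀ g : ℝ → ℝ, IntegrableOn g (Icc (-1) 1) → ∀ n : ℕ, 1 ≤ n →
      ContinuousOn (IopIter (kIter k 1) g n) (Icc (-1) 1) ∧
      ∀ x ∈ Icc (-1 : ℝ) 1, |IopIter (kIter k 1) g n x| ≤
        2 * kIter k 1 1 * (∫ y in Icc (-1 : ℝ) 1, |g y|) *
          (kIter k 1 1 * (1 + x)) ^ (n - 1) / (Nat.factorial (n - 1) : ℝ)) ∧
    (∀ g : ℝ → ℝ, ContinuousOn g (Icc (-1) 1) → ∀ n : ℕ, 1 ≤ n →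
      ContinuousOn (IopIter (kIter k 1) g n) (Icc (-1) 1) ∧
      ∀ x ∈ Icc (-1 : ℝ) 1, |IopIter (kIter k 1) g n x| ≤
        2 * kIter k 1 1 * sSup ((fun y : ℝ => |g y|) '' Icc (-1 : ℝ) 1) *
          (kIter k 1 1 * (1 + x)) ^ (n - 1) / (Nat.factorial (n - 1) : ℝ)) ∧
    (∀ g : ℝ → ℝ, IntegrableOn g (Icc (-1) 1) →
      (∀ x ∈ Icc (-1 : ℝ) 1, Summable (fun n : ℕ => β ^ n * IopIter (kIter k 1) g n x)) ∧
      IntegrableOn (MLop (kIter k 1) β g) (Icc (-1) 1) ∧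
      (∫ x in Icc (-1 : ℝ) 1, |MLop (kIter k 1) β g x|) ≤
        (∫ x in Icc (-1 : ℝ) 1, |g x|) *
          (1 + 2 * kIter k 1 1 * |β| * Real.exp (2 * kIter k 1 1 * |β|))) ∧
    (∀ g : ℝ → ℝ, ContinuousOn g (Icc (-1) 1) →
      ContinuousOn (MLop (kIter k 1) β g) (Icc (-1) 1) ∧
      ∀ x ∈ Icc (-1 : ℝ) 1, |MLop (kIter k 1) β g x| ≤
        sSup ((fun y : ℝ => |g y|) '' Icc (-1 : ℝ) 1) *
          (1 + 2 * kIter k 1 1 * |β| * Real.exp (2 * kIter k 1 1 * |β|))) ∧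
    (∀ g : ℝ → ℝ, IntegrableOn g (Icc (-1) 1) →
      ∃ v : ℝ → ℝ, IntegrableOn v (Icc (-1) 1) ∧
        (∀ x ∈ Icc (-1 : ℝ) 1,
          MLop (kIter k 1) β (Iop (kIter k 1) g) x = ∫ t in (-1 : ℝ)..x, v t) ∧
        ∀ᵐ x ∂(volume.restrict (Ioo (-1 : ℝ) 1)),
          deriv (fun z : ℝ => ∫ y in (0 : ℝ)..(z + 1),
              PhiFn φ y * (Icc (-1 : ℝ) 1).indicator v (z - y)) x =
            g x + β * MLop (kIter k 1) β (Iop (kIter k 1) g) x) := by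
  have hvolt := hk.isLaplaceKernel.isVolterraKernel_kIter_one 1
  have hK := hvolt.nonneg
  have hlen : kIter k 1 1 * (1 + 1) = 2 * kIter k 1 1 := by ring
  refine ⟨fun g hg n hn => ?_, fun g hg n hn => ?_,
    fun g hg => ⟨fun x hx => hvolt.summable_MLop hg β hx, hvolt.integrableOn_MLop hg β,
      hlen ▸ hvolt.integral_abs_MLop_le (by norm_num) hg β⟩,
    fun g hg => ⟨hvolt.continuousOn_MLop hg β, fun x hx =>
      hlen ▸ hvolt.abs_MLop_le_mul_one_add hg.integrableOn_Icc
        (fun y hy => abs_le_sSup_image_abs hg hy) β hx⟩,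
    fun g hg => ?_⟩
  · obtain ⟨n, rfl⟩ := Nat.exists_eq_add_of_le' hn
    have hL1 : 0 ≤ ∫ y in Icc (-1 : ℝ) 1, |g y| := integral_nonneg fun _ => abs_nonneg _
    exact ⟨hvolt.continuousOn_IopIter_succ hg n, fun x hx =>
      hvolt.abs_IopIter_succ_le hg (by nlinarith) n hx⟩
  · obtain ⟨n, rfl⟩ := Nat.exists_eq_add_of_le' hn
    have hL1 := setIntegral_abs_le_mul_sSup (by norm_num) hg
    exact ⟨hvolt.continuousOn_IopIter_succ hg.integrableOn_Icc n, fun x hx =>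
      hvolt.abs_IopIter_succ_le hg.integrableOn_Icc (by nlinarith) n hx⟩
  · have hE := hvolt.integrableOn_MLop hg β
    refine ⟨_, hk.isLaplaceKernel.integrableOn_convolution_indicator hE, fun x hx => ?_, ?_⟩
    · rw [← hvolt.Iop_MLop hg β hx, hk.isLaplaceKernel.Iop_kIter_one_eq_integral hE hx]
    · filter_upwards [(hH0.isSoninePair hk).ae_deriv_eq hE, ae_restrict_mem measurableSet_Ioo]
        with x hx hx1
      rw [← hvolt.MLop_eq_add hg β (Ioo_subset_Icc_self hx1), ← hx]
      simp only [sub_neg_eq_add]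

/-- bounds and convergence for the Mittag-Leffler type operators, and
the identity `∂^ψ_+ (E^{ψ,β}_+ I^ψ_+ g) = g + β E^{ψ,β}_+ I^ψ_+ g` a.e. on `[-1,1]`. -/
theorem mittagLeffler_operator (φ : Measure ℝ) (hH0 : H0 φ) (k : ℝ → ℝ)
    (hk : IsScaleKernel φ k) (β : ℝ) (hβ : 0 < β) :
    (∀ g : ℝ → ℝ, IntegrableOn g (Icc (-1) 1) → ∀ n : ℕ, 1 ≤ n →
      ContinuousOn (IopIter (kIter k 1) g n) (Icc (-1) 1) ∧
      ∀ x ∈ Icc (-1 : ℝ) 1, |IopIter (kIter k 1) g n x| ≤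
        2 * kIter k 1 1 * (∫ y in Icc (-1 : ℝ) 1, |g y|) *
          (kIter k 1 1 * (1 + x)) ^ (n - 1) / (Nat.factorial (n - 1) : ℝ)) ∧
    (∀ g : ℝ → ℝ, ContinuousOn g (Icc (-1) 1) → ∀ n : ℕ, 1 ≤ n →
      ContinuousOn (IopIter (kIter k 1) g n) (Icc (-1) 1) ∧
      ∀ x ∈ Icc (-1 : ℝ) 1, |IopIter (kIter k 1) g n x| ≤
        2 * kIter k 1 1 * sSup ((fun y : ℝ => |g y|) '' Icc (-1 : ℝ) 1) *
          (kIter k 1 1 * (1 + x)) ^ (n - 1) / (Nat.factorial (n - 1) : ℝ)) ∧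
    (∀ g : ℝ → ℝ, IntegrableOn g (Icc (-1) 1) →
      (∀ x ∈ Icc (-1 : ℝ) 1, Summable (fun n : ℕ => β ^ n * IopIter (kIter k 1) g n x)) ∧
      IntegrableOn (MLop (kIter k 1) β g) (Icc (-1) 1) ∧
      (∫ x in Icc (-1 : ℝ) 1, |MLop (kIter k 1) β g x|) ≤
        (∫ x in Icc (-1 : ℝ) 1, |g x|) *
          (1 + 2 * kIter k 1 1 * β * Real.exp (2 * kIter k 1 1 * β))) ∧
    (∀ g : ℝ → ℝ, ContinuousOn g (Icc (-1) 1) →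
      ContinuousOn (MLop (kIter k 1) β g) (Icc (-1) 1) ∧
      ∀ x ∈ Icc (-1 : ℝ) 1, |MLop (kIter k 1) β g x| ≤
        sSup ((fun y : ℝ => |g y|) '' Icc (-1 : ℝ) 1) *
          (1 + 2 * kIter k 1 1 * β * Real.exp (2 * kIter k 1 1 * β))) ∧
    (∀ g : ℝ → ℝ, IntegrableOn g (Icc (-1) 1) →
      ∃ v : ℝ → ℝ, IntegrableOn v (Icc (-1) 1) ∧
        (∀ x ∈ Icc (-1 : ℝ) 1,
          MLop (kIter k 1) β (Iop (kIter k 1) g) x = ∫ t in (-1 : ℝ)..x, v t) ∧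
        ∀ᵐ x ∂(volume.restrict (Ioo (-1 : ℝ) 1)),
          deriv (fun z : ℝ => ∫ y in (0 : ℝ)..(z + 1),
              PhiFn φ y * (Icc (-1 : ℝ) 1).indicator v (z - y)) x =
            g x + β * MLop (kIter k 1) β (Iop (kIter k 1) g) x) := by
  simpa only [abs_of_pos hβ] using mittagLeffler_operator_general φ hH0 k hk β
end
end

section
/- The Grünwald-type scheme generates a Feller semigroup on the line: under (H0), fix h > 0. The formula (A_h f)(x) = Σ_{j=0}^∞ G^ψ_{j,h} f(x + (j−1)h) defines a bounded linear operator A_h on the Banach space C₀(ℝ) of continuous functions vanishing at infinity (the series converges absolutely in supremum norm, since G^ψ_{j,h} > 0 for j ≠ 1 and Σ_{j≠1} G^ψ_{j,h} = −G^ψ_{1,h} < ∞), with operator norm ‖A_h‖ ≤ 2|G^ψ_{1,h}|. Moreover, for every t ≥ 0, the operator exponential e^{t A_h} is a positive contraction on C₀(ℝ): ‖e^{t A_h} f‖_∞ ≤ ‖f‖_∞ for every f ∈ C₀(ℝ), and e^{t A_h} f ≥ 0 whenever f ≥ 0. -/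
open MeasureTheory Set Filter Topology

noncomputable section

/-- Grünwald-type coefficients `G^ψ_{j,h} = ((-1)^j/(j! h^j)) ψ^{(j)}(1/h)`. -/
def grunPsi (φ : Measure ℝ) (j : ℕ) (h : ℝ) : ℝ :=
  (((-1 : ℂ) ^ j / ((Nat.factorial j : ℂ) * (h : ℂ) ^ j)) *
    iteratedDeriv j (psiFn φ) ((1 : ℂ) / (h : ℂ))).re

/-- Grünwald-type coefficients of order `ψ - 1`:
`G^{ψ-1}_{j,h} = ((-1)^j/(j! h^j)) (d^j/dξ^j)(ψ(ξ)/ξ)|_{ξ=1/h}`. -/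
def grunPsiM1 (φ : Measure ℝ) (j : ℕ) (h : ℝ) : ℝ :=
  (((-1 : ℂ) ^ j / ((Nat.factorial j : ℂ) * (h : ℂ) ^ j)) *
    iteratedDeriv j (fun ξ : ℂ => psiFn φ ξ / ξ) ((1 : ℂ) / (h : ℂ))).re

/-- Grünwald-type coefficients for the scale functions:
`G^{k_i}_{j,h} = ((-1)^j/(j! h^j)) (d^j/dξ^j)(ξ^{-i}/ψ(ξ))|_{ξ=1/h}` for `i ∈ {1,0,-1,-2}`. -/
def grunK (φ : Measure ℝ) (i : ℤ) (j : ℕ) (h : ℝ) : ℝ :=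
  (((-1 : ℂ) ^ j / ((Nat.factorial j : ℂ) * (h : ℂ) ^ j)) *
    iteratedDeriv j (fun ξ : ℂ => ξ ^ (-i) / psiFn φ ξ) ((1 : ℂ) / (h : ℂ))).re

open scoped ZeroAtInfty

/-- The operator exponential `e^{tA} = Σ_n (tⁿ/n!) Aⁿ` of a bounded operator `A` on
`C₀(ℝ)` (the series converges in operator norm). -/
def expOp (A : C₀(ℝ, ℝ) →L[ℝ] C₀(ℝ, ℝ)) (t : ℝ) : C₀(ℝ, ℝ) →L[ℝ] C₀(ℝ, ℝ) :=
  ∑' n : ℕ, (t ^ n / (Nat.factorial n : ℝ)) • (A ^ n)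

/-!
Expanding `ψ((1 - u)/h) = ∫ (e^{-(1-u)z/h} - 1 + (1-u)z/h) φ(dz)` in powers of `u` identifies the
coefficient `G_j = G^ψ_{j,h}` with `∫ p_j(z/h) φ(dz)`, where `p(w)` is the Poisson law with mean `w`
minus the signed two-point law on `{0, 1}` with the same mean. Hence `G_j ≥ 0` for `j ≠ 1`, and
`Σ_j G_j = 0` (take `u = 1`). Since `p_1(w) ≤ 0` carries half of the total variation, everything is
dominated by `|p_1(w)| ≤ min(w², w)`.

With translations `T_j` by `(j - 1)h`, so that `T_1 = 1`, the operator `A = Σ_j G_j T_j` becomes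
positive and of norm at most `|G_1|` once `|G_1|` times the identity is added. Therefore
`e^{tA} = e^{-t|G_1|} e^{t(A + |G_1|)}` is a positive contraction.
-/

section WeightSequences

variable {ι : Type*} {w : ι → ℝ} {i : ι}

lemma update_zero_nonneg [DecidableEq ι] (hw : ∀ j ≠ i, 0 ≤ w j) (j : ι) :
    0 ≤ Function.update w i 0 j := by
  rcases eq_or_ne j i with rfl | hj
  · rw [Function.update_self]
  · rw [Function.update_of_ne hj]
    exact hw j hj

lemma hasSum_update_zero_abs [DecidableEq ι] (hw : ∀ j ≠ i, 0 ≤ w j) (hsum : HasSum w 0) :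
    HasSum (Function.update w i 0) |w i| := by
  have h : HasSum (Function.update w i 0) (-w i) := by simpa using hsum.update i 0
  rwa [abs_of_nonpos (neg_nonneg.1 (h.nonneg (update_zero_nonneg hw)))]

lemma hasSum_abs_of_hasSum_zero (hw : ∀ j ≠ i, 0 ≤ w j) (hsum : HasSum w 0) :
    HasSum (fun j => |w j|) (2 * |w i|) := by
  classical
  have habs : (fun j => |w j|) = Function.update (Function.update w i 0) i |w i| := by
    ext j
    rcases eq_or_ne j i with rfl | hj
    · simp
    · simp [hj, abs_of_nonneg (hw j hj)]
  rw [habs, two_mul]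
  simpa using (hasSum_update_zero_abs hw hsum).update i |w i|

lemma abs_apply_le_of_hasSum_zero (hw : ∀ j ≠ i, 0 ≤ w j) (hsum : HasSum w 0) (j : ι) :
    |w j| ≤ |w i| := by
  classical
  rcases eq_or_ne j i with rfl | hj
  · rfl
  · simpa [hj, abs_of_nonneg (hw j hj)] using
      le_hasSum (hasSum_update_zero_abs hw hsum) j fun k _ => update_zero_nonneg hw k

end WeightSequences

section BanachAlgebra

variable {𝔸 : Type*} [NormedRing 𝔸] [NormedAlgebra ℝ 𝔸]

lemma tsum_div_factorial_smul_pow (a : 𝔸) (t : ℝ) :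
    ∑' n : ℕ, (t ^ n / (n.factorial : ℝ)) • a ^ n = NormedSpace.exp (t • a) := by
  rw [NormedSpace.exp_eq_tsum ℝ]
  exact tsum_congr fun n => by rw [smul_pow, smul_smul, div_eq_inv_mul]

variable [CompleteSpace 𝔸]

lemma norm_exp_le_exp_norm [NormOneClass 𝔸] (a : 𝔸) : ‖NormedSpace.exp a‖ ≤ Real.exp ‖a‖ := by
  have h : HasSum (fun n : ℕ => ‖a‖ ^ n / (n.factorial : ℝ)) (Real.exp ‖a‖) := by
    rw [Real.exp_eq_exp_ℝ]
    exact NormedSpace.expSeries_div_hasSum_exp ‖a‖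
  refine (NormedSpace.exp_series_hasSum_exp' (𝕂 := ℝ) a).norm_le_of_bounded h fun n => ?_
  rw [norm_smul, Real.norm_of_nonneg (by positivity), div_eq_inv_mul]
  gcongr
  exact norm_pow_le a n

lemma exp_smul_eq_exp_neg_smul_exp_smul_add (a : 𝔸) (c t : ℝ) :
    NormedSpace.exp (t • a) = Real.exp (-(t * c)) • NormedSpace.exp (t • (a + c • (1 : 𝔸))) := by
  let _ : NormedAlgebra ℚ 𝔸 := NormedAlgebra.restrictScalars ℚ ℝ 𝔸
  have hscalar : NormedSpace.exp (algebraMap ℝ 𝔸 (t * c)) = algebraMap ℝ 𝔸 (Real.exp (t * c)) := by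
    rw [← NormedSpace.algebraMap_exp_comm, Real.exp_eq_exp_ℝ]
  have hsplit : t • (a + c • (1 : 𝔸)) = algebraMap ℝ 𝔸 (t * c) + t • a := by
    rw [smul_add, smul_smul, Algebra.algebraMap_eq_smul_one, add_comm]
  rw [hsplit, NormedSpace.exp_add_of_commute (Algebra.commutes _ _), hscalar, ← Algebra.smul_def,
    smul_smul, ← Real.exp_add, neg_add_cancel, Real.exp_zero, one_smul]

lemma norm_exp_smul_le_one [NormOneClass 𝔸] {a : 𝔸} {c t : ℝ} (h : ‖a + c • (1 : 𝔸)‖ ≤ c)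
    (ht : 0 ≤ t) : ‖NormedSpace.exp (t • a)‖ ≤ 1 := by
  rw [exp_smul_eq_exp_neg_smul_exp_smul_add a c, norm_smul, Real.norm_of_nonneg (Real.exp_nonneg _)]
  calc Real.exp (-(t * c)) * ‖NormedSpace.exp (t • (a + c • (1 : 𝔸)))‖
      ≤ Real.exp (-(t * c)) * Real.exp ‖t • (a + c • (1 : 𝔸))‖ := by
        gcongr; exact norm_exp_le_exp_norm _
    _ ≤ Real.exp (-(t * c)) * Real.exp (t * c) := by
        rw [norm_smul, Real.norm_of_nonneg ht]; gcongr
    _ = 1 := by rw [← Real.exp_add, neg_add_cancel, Real.exp_zero]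

end BanachAlgebra

section Operators

variable {E : Type*} [NormedAddCommGroup E] [NormedSpace ℝ E] {K : ProperCone ℝ E}

lemma mapsTo_properCone_of_hasSum {ι : Type*} {B : ι → E →L[ℝ] E} {S : E →L[ℝ] E}
    (hB : HasSum B S) (hK : ∀ j, MapsTo (B j) K K) : MapsTo S K K := fun f hf =>
  K.isClosed.mem_of_tendsto (hB.mapL (ContinuousLinearMap.apply ℝ E f))
    (Eventually.of_forall fun _ => K.toSubmodule.sum_mem fun j _ => hK j hf)

lemma mapsTo_smul_properCone {B : E →L[ℝ] E} (hB : MapsTo B K K) {c : ℝ} (hc : 0 ≤ c) :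
    MapsTo (c • B) K K := fun _ hf => K.smul_mem (hB hf) hc

variable [CompleteSpace E]

lemma mapsTo_exp_properCone {B : E →L[ℝ] E} (hB : MapsTo B K K) :
    MapsTo (NormedSpace.exp B : E →L[ℝ] E) K K := by
  refine mapsTo_properCone_of_hasSum (NormedSpace.exp_series_hasSum_exp' (𝕂 := ℝ) B) fun n => ?_
  refine mapsTo_smul_properCone ?_ (by positivity)
  rw [FunLike.coe_pow_eq_iterate]
  exact hB.iterate n

-- The exponential is written as a series in the next two statements because instance search fails
-- to find the topological ring structure that `NormedSpace.exp` needs on operators of `C₀(ℝ, ℝ)`.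
lemma mapsTo_exp_series_properCone {A : E →L[ℝ] E} {c t : ℝ}
    (hA : MapsTo (A + c • 1 : E →L[ℝ] E) K K) (ht : 0 ≤ t) :
    MapsTo (∑' n : ℕ, (t ^ n / (n.factorial : ℝ)) • A ^ n : E →L[ℝ] E) K K := by
  rw [tsum_div_factorial_smul_pow, exp_smul_eq_exp_neg_smul_exp_smul_add A c]
  exact mapsTo_smul_properCone (mapsTo_exp_properCone (mapsTo_smul_properCone hA ht))
    (Real.exp_nonneg _)

lemma norm_exp_series_apply_le {A : E →L[ℝ] E} {c t : ℝ} (hA : ‖A + c • 1‖ ≤ c)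
    (ht : 0 ≤ t) (f : E) :
    ‖(∑' n : ℕ, (t ^ n / (n.factorial : ℝ)) • A ^ n : E →L[ℝ] E) f‖ ≤ ‖f‖ := by
  rw [tsum_div_factorial_smul_pow]
  rcases subsingleton_or_nontrivial E with _ | _
  · simp [Subsingleton.elim f 0]
  · simpa using ContinuousLinearMap.le_of_opNorm_le _ (norm_exp_smul_le_one hA ht) f

end Operators

section WeightedSums

variable {E : Type*} [NormedAddCommGroup E] [NormedSpace ℝ E] {K : ProperCone ℝ E}
  {ι : Type*} {w : ι → ℝ} {i : ι} {T : ι → E →L[ℝ] E} {A : E →L[ℝ] E}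

lemma norm_smul_le_abs_of_norm_le_one (hT : ∀ j, ‖T j‖ ≤ 1) (j : ι) : ‖w j • T j‖ ≤ |w j| := by
  rw [norm_smul, Real.norm_eq_abs]
  exact mul_le_of_le_one_right (abs_nonneg _) (hT j)

lemma summable_smul_of_hasSum_zero [CompleteSpace E] (hw : ∀ j ≠ i, 0 ≤ w j) (hsum : HasSum w 0)
    (hT : ∀ j, ‖T j‖ ≤ 1) : Summable fun j => w j • T j :=
  .of_norm_bounded (hasSum_abs_of_hasSum_zero hw hsum).summable (norm_smul_le_abs_of_norm_le_one hT)

lemma norm_le_two_mul_abs_of_hasSum_smul (hw : ∀ j ≠ i, 0 ≤ w j) (hsum : HasSum w 0)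
    (hT : ∀ j, ‖T j‖ ≤ 1) (hA : HasSum (fun j => w j • T j) A) : ‖A‖ ≤ 2 * |w i| :=
  hA.norm_le_of_bounded (hasSum_abs_of_hasSum_zero hw hsum) (norm_smul_le_abs_of_norm_le_one hT)

lemma hasSum_update_zero_smul [DecidableEq ι] (hw : ∀ j ≠ i, 0 ≤ w j) (hsum : HasSum w 0)
    (hTi : T i = 1) (hA : HasSum (fun j => w j • T j) A) :
    HasSum (fun j => Function.update w i 0 j • T j) (A + |w i| • 1) := by
  have hwi : |w i| = -w i := by
    simpa using (hasSum_update_zero_abs hw hsum).unique (hsum.update i 0)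
  have hterms : (fun j => Function.update w i 0 j • T j) =
      Function.update (fun j => w j • T j) i 0 := by
    ext1 j
    rcases eq_or_ne j i with rfl | hj
    · simp
    · simp [hj]
  have htotal : A + |w i| • 1 = 0 - w i • T i + A := by
    rw [hwi, hTi, zero_sub, neg_smul, add_comm]
  rw [hterms, htotal]
  exact hA.update i 0

lemma norm_add_abs_smul_one_le (hw : ∀ j ≠ i, 0 ≤ w j) (hsum : HasSum w 0)
    (hT : ∀ j, ‖T j‖ ≤ 1) (hTi : T i = 1) (hA : HasSum (fun j => w j • T j) A) :
    ‖A + |w i| • 1‖ ≤ |w i| := by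
  classical
  refine (hasSum_update_zero_smul hw hsum hTi hA).norm_le_of_bounded
    (hasSum_update_zero_abs hw hsum) fun j => ?_
  exact (norm_smul_le_abs_of_norm_le_one hT j).trans_eq (abs_of_nonneg (update_zero_nonneg hw j))

lemma mapsTo_add_abs_smul_one (hw : ∀ j ≠ i, 0 ≤ w j) (hsum : HasSum w 0)
    (hTK : ∀ j, MapsTo (T j) K K) (hTi : T i = 1) (hA : HasSum (fun j => w j • T j) A) :
    MapsTo (A + |w i| • 1 : E →L[ℝ] E) K K := by
  classical
  exact mapsTo_properCone_of_hasSum (hasSum_update_zero_smul hw hsum hTi hA) fun j =>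
    mapsTo_smul_properCone (hTK j) (update_zero_nonneg hw j)

end WeightedSums

section ZeroAtInfty

variable {X Y : Type*} [TopologicalSpace X] [TopologicalSpace Y]

/-- The evaluation functional `f ↦ f x` on `C₀(X)`. -/
def evalC₀ (x : X) : C₀(X, ℝ) →L[ℝ] ℝ :=
  LinearMap.mkContinuous
    { toFun := fun f => f x
      map_add' := fun _ _ => rfl
      map_smul' := fun _ _ => rfl } 1
    fun f => by
      rw [one_mul, ← ZeroAtInftyContinuousMap.norm_toBCF_eq_norm]
      exact f.toBCF.norm_coe_le_norm x

/-- The composition operator `f ↦ f ∘ g` from `C₀(Y)` to `C₀(X)`, for `g : X → Y` continuous and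
proper. -/
def compC₀ (g : CocompactMap X Y) : C₀(Y, ℝ) →L[ℝ] C₀(X, ℝ) :=
  LinearMap.mkContinuous (ZeroAtInftyContinuousMap.compLinearMap g) 1 fun f => by
    rw [one_mul, ← ZeroAtInftyContinuousMap.norm_toBCF_eq_norm,
      ← ZeroAtInftyContinuousMap.norm_toBCF_eq_norm,
      BoundedContinuousFunction.norm_le (norm_nonneg _)]
    exact fun x => f.toBCF.norm_coe_le_norm (g x)

/-- The closed cone of nonnegative functions in `C₀(X)`. -/
def nonnegC₀ (X : Type*) [TopologicalSpace X] : ProperCone ℝ C₀(X, ℝ) :=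
  ⨅ x : X, (ProperCone.positive ℝ ℝ).comap (evalC₀ x)

lemma mem_nonnegC₀ {f : C₀(X, ℝ)} : f ∈ nonnegC₀ X ↔ ∀ x, 0 ≤ f x := by
  simp only [nonnegC₀, ClosedSubmodule.mem_iInf, ProperCone.mem_comap, ProperCone.mem_positive]
  rfl

lemma norm_compC₀_le_one (g : CocompactMap X Y) : ‖compC₀ g‖ ≤ 1 :=
  LinearMap.mkContinuous_norm_le _ zero_le_one _

lemma mapsTo_compC₀_nonnegC₀ (g : CocompactMap X Y) :
    MapsTo (compC₀ g) (nonnegC₀ Y) (nonnegC₀ X) := fun _ hf =>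
  mem_nonnegC₀.2 fun x => mem_nonnegC₀.1 hf (g x)

/-- The translation operator `f ↦ f (· + a)` on `C₀(G)`. -/
def translateC₀ {G : Type*} [TopologicalSpace G] [AddGroup G] [ContinuousAdd G] (a : G) :
    C₀(G, ℝ) →L[ℝ] C₀(G, ℝ) :=
  compC₀ (Homeomorph.addRight a).toCocompactMap

lemma translateC₀_zero {G : Type*} [TopologicalSpace G] [AddGroup G] [ContinuousAdd G] :
    translateC₀ (0 : G) = 1 := by
  ext f x
  exact congrArg f (add_zero x)

lemma norm_expOp_apply_le {A : C₀(ℝ, ℝ) →L[ℝ] C₀(ℝ, ℝ)} {c t : ℝ} (hA : ‖A + c • 1‖ ≤ c)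
    (ht : 0 ≤ t) (f : C₀(ℝ, ℝ)) : ‖expOp A t f‖ ≤ ‖f‖ :=
  norm_exp_series_apply_le hA ht f

lemma expOp_apply_nonneg {A : C₀(ℝ, ℝ) →L[ℝ] C₀(ℝ, ℝ)} {c t : ℝ}
    (hA : MapsTo (A + c • 1 : C₀(ℝ, ℝ) →L[ℝ] C₀(ℝ, ℝ)) (nonnegC₀ ℝ) (nonnegC₀ ℝ)) (ht : 0 ≤ t)
    {f : C₀(ℝ, ℝ)} (hf : ∀ x, 0 ≤ f x) (x : ℝ) : 0 ≤ expOp A t f x :=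
  mem_nonnegC₀.1 (mapsTo_exp_series_properCone hA ht (mem_nonnegC₀.2 hf)) x

end ZeroAtInfty

section PowerSeries

lemma iteratedDeriv_eq_factorial_mul_of_hasSum {𝕜 : Type*} [NontriviallyNormedField 𝕜]
    [CompleteSpace 𝕜] [CharZero 𝕜] {f : 𝕜 → 𝕜} {z : 𝕜} {a : ℕ → 𝕜}
    (hf : ∀ᶠ v in 𝓝 0, HasSum (fun n => v ^ n * a n) (f (z + v))) (n : ℕ) :
    iteratedDeriv n f z = n.factorial * a n := by
  have hseries : HasFPowerSeriesAt f (FormalMultilinearSeries.ofScalars 𝕜 a) z := by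
    rw [hasFPowerSeriesAt_iff]
    simpa [FormalMultilinearSeries.coeff_ofScalars] using hf
  have hcoeff := congrArg (fun p => p.coeff n)
    (hseries.eq_formalMultilinearSeries hseries.analyticAt.hasFPowerSeriesAt)
  rw [FormalMultilinearSeries.coeff_ofScalars] at hcoeff
  simp only [FormalMultilinearSeries.coeff_ofScalars] at hcoeff
  rw [hcoeff]
  field_simp [Nat.factorial_ne_zero]

end PowerSeries

section Kernel

/-- The integrand `e^{-v} - 1 + v` of the Lévy–Khintchine representation
`ψ(ξ) = ∫ (e^{-ξz} - 1 + ξz) φ(dz)`. -/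
def compensatedExp (v : ℂ) : ℂ := Complex.exp (-v) - 1 + v

/-- The weights of the Poisson law with mean `w` minus those of the signed two-point law
`(1 - w) δ₀ + w δ₁`, which has the same mass and the same mean. They are the coefficients of
`u ↦ e^{-(1-u)w} - 1 + (1-u)w`. -/
def compensatedPoisson (w : ℝ) : ℕ → ℝ
  | 0 => Real.exp (-w) - (1 - w)
  | 1 => Real.exp (-w) * w - w
  | j + 2 => Real.exp (-w) * (w ^ (j + 2) / (j + 2).factorial)

lemma hasSum_pow_mul_compensatedPoisson (u : ℂ) (w : ℝ) :
    HasSum (fun j => u ^ j * (compensatedPoisson w j : ℂ)) (compensatedExp ((1 - u) * w)) := by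
  have hexp : HasSum (fun j : ℕ => Complex.exp (-w) * ((u * w) ^ j / (j.factorial : ℂ)))
      (Complex.exp (-((1 - u) * w))) := by
    have hsplit : Complex.exp (-((1 - u) * w)) = Complex.exp (-w) * Complex.exp (u * w) := by
      rw [← Complex.exp_add]
      ring_nf
    rw [hsplit, Complex.exp_eq_exp_ℂ]
    exact (NormedSpace.expSeries_div_hasSum_exp (u * w : ℂ)).mul_left _
  rw [← hasSum_nat_add_iff' 2] at hexp ⊢
  convert hexp using 1
  · ext j
    simp only [compensatedPoisson]
    push_cast
    ring
  · simp only [compensatedExp, compensatedPoisson, Finset.sum_range_succ, Finset.sum_range_zero]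
    push_cast
    simp only [pow_zero, pow_one, Nat.factorial_zero, Nat.factorial_one, Nat.cast_one]
    ring

lemma hasSum_compensatedPoisson (w : ℝ) : HasSum (compensatedPoisson w) 0 := by
  rw [← Complex.hasSum_ofReal]
  simpa [compensatedExp] using hasSum_pow_mul_compensatedPoisson 1 w

lemma ofReal_compensatedPoisson_zero (w : ℝ) :
    (compensatedPoisson w 0 : ℂ) = compensatedExp w := by
  simp only [compensatedPoisson, compensatedExp]
  push_cast
  ring

lemma compensatedPoisson_nonneg {w : ℝ} (hw : 0 ≤ w) : ∀ j ≠ 1, 0 ≤ compensatedPoisson w j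
  | 0, _ => by
    have := Real.add_one_le_exp (-w)
    simp only [compensatedPoisson]
    linarith
  | j + 2, _ => by
    simp only [compensatedPoisson]
    positivity

lemma abs_compensatedPoisson_le {w : ℝ} (hw : 0 ≤ w) (j : ℕ) :
    |compensatedPoisson w j| ≤ min (w ^ 2) w := by
  refine (abs_apply_le_of_hasSum_zero (compensatedPoisson_nonneg hw)
    (hasSum_compensatedPoisson w) j).trans ?_
  have hone : compensatedPoisson w 1 = -(w * (1 - Real.exp (-w))) := by
    simp only [compensatedPoisson]
    ring
  have hexp_le : Real.exp (-w) ≤ 1 := Real.exp_le_one_iff.2 (neg_nonpos.2 hw)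
  rw [hone, abs_neg, abs_of_nonneg (mul_nonneg hw (sub_nonneg.2 hexp_le))]
  refine le_min ?_ (mul_le_of_le_one_right hw (sub_le_self 1 (Real.exp_nonneg _)))
  rw [pow_two]
  gcongr
  linarith [Real.add_one_le_exp (-w)]

@[fun_prop]
lemma continuous_compensatedPoisson : ∀ j, Continuous fun w => compensatedPoisson w j
  | 0 => by simp only [compensatedPoisson]; fun_prop
  | 1 => by simp only [compensatedPoisson]; fun_prop
  | j + 2 => by simp only [compensatedPoisson]; fun_prop

end Kernel

section LaplaceTransform

lemma integrableOn_exp_neg_mul_posPart (ξ : ℂ) (z : ℝ) :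
    IntegrableOn (fun x : ℝ => Complex.exp (-ξ * x) * ((max (z - x) 0 : ℝ) : ℂ)) (Ioi 0) := by
  have hIoc : IntegrableOn (fun x : ℝ => Complex.exp (-ξ * x) * ((max (z - x) 0 : ℝ) : ℂ))
      (Ioc 0 z) :=
    (Continuous.integrableOn_Icc (by fun_prop)).mono_set Ioc_subset_Icc_self
  refine hIoc.of_forall_sdiff_eq_zero measurableSet_Ioi fun x hx => ?_
  have hzx : z < x := not_le.1 fun hxz => hx.2 ⟨hx.1, hxz⟩
  simp [max_eq_right (sub_nonpos.2 hzx.le)]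

lemma hasDerivAt_exp_neg_mul_affine {ξ : ℂ} (hξ : ξ ≠ 0) (z : ℂ) (x : ℝ) :
    HasDerivAt (fun x : ℝ => Complex.exp (-ξ * x) * (-(z - x) / ξ + 1 / ξ ^ 2))
      (Complex.exp (-ξ * x) * (z - x)) x := by
  have hx : HasDerivAt (fun x : ℝ => (x : ℂ)) 1 x := Complex.ofRealCLM.hasDerivAt
  refine ((hx.const_mul (-ξ)).cexp.mul
    (((hx.const_sub z).neg.div_const ξ).add_const (1 / ξ ^ 2))).congr_deriv ?_
  simp only [Pi.neg_apply]
  field_simp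
  ring

lemma integral_exp_neg_mul_posPart {ξ : ℂ} (hξ : ξ ≠ 0) {z : ℝ} (hz : 0 ≤ z) :
    ∫ x in Ioi (0 : ℝ), Complex.exp (-ξ * x) * ((max (z - x) 0 : ℝ) : ℂ) =
      compensatedExp (ξ * z) / ξ ^ 2 := by
  calc ∫ x in Ioi (0 : ℝ), Complex.exp (-ξ * x) * ((max (z - x) 0 : ℝ) : ℂ)
      = ∫ x in Ioc 0 z, Complex.exp (-ξ * x) * ((max (z - x) 0 : ℝ) : ℂ) := by
        refine setIntegral_eq_of_subset_of_forall_sdiff_eq_zero measurableSet_Ioi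
          Ioc_subset_Ioi_self fun x hx => ?_
        have hzx : z < x := not_le.1 fun hxz => hx.2 ⟨hx.1, hxz⟩
        simp [max_eq_right (sub_nonpos.2 hzx.le)]
    _ = ∫ x in (0 : ℝ)..z, Complex.exp (-ξ * x) * ((z : ℂ) - x) := by
        rw [intervalIntegral.integral_of_le hz]
        refine setIntegral_congr_fun measurableSet_Ioc fun x hx => ?_
        simp [max_eq_left (sub_nonneg.2 hx.2)]
    _ = compensatedExp (ξ * z) / ξ ^ 2 := by
        rw [intervalIntegral.integral_eq_sub_of_hasDerivAt
          (fun x _ => hasDerivAt_exp_neg_mul_affine hξ z x)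
          (Continuous.intervalIntegrable (by fun_prop) _ _), compensatedExp]
        simp only [neg_mul, sub_self, neg_zero, zero_div, one_div, zero_add, Complex.ofReal_zero,
          mul_zero, Complex.exp_zero, sub_zero, one_mul]
        field_simp
        ring

lemma integral_norm_exp_neg_mul_posPart {ξ : ℂ} (hξ : ξ.re ≠ 0) {z : ℝ} (hz : 0 ≤ z) :
    ∫ x in Ioi (0 : ℝ), ‖Complex.exp (-ξ * x) * ((max (z - x) 0 : ℝ) : ℂ)‖ =
      compensatedPoisson (ξ.re * z) 0 / ξ.re ^ 2 := by
  have hnorm : ∀ x : ℝ, ((‖Complex.exp (-ξ * x) * ((max (z - x) 0 : ℝ) : ℂ)‖ : ℝ) : ℂ) =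
      Complex.exp (-(ξ.re : ℂ) * x) * ((max (z - x) 0 : ℝ) : ℂ) := fun x => by
    rw [norm_mul, Complex.norm_exp, Complex.norm_real, Real.norm_of_nonneg (le_max_right _ _)]
    simp
  apply Complex.ofReal_injective
  rw [← integral_complex_ofReal]
  simp only [hnorm]
  rw [integral_exp_neg_mul_posPart (Complex.ofReal_ne_zero.2 hξ) hz]
  push_cast
  rw [ofReal_compensatedPoisson_zero, Complex.ofReal_mul]

end LaplaceTransform

lemma sigmaFinite_of_integrable_of_ae_ne_zero {α E : Type*} [MeasurableSpace α]
    [NormedAddCommGroup E] {μ : Measure α} {f : α → E} (hf : Integrable f μ)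
    (hne : ∀ᵐ x ∂μ, f x ≠ 0) : SigmaFinite μ := by
  have hfin := hf.aefinStronglyMeasurable
  have hmem : ∀ᵐ x ∂μ, x ∈ hfin.sigmaFiniteSet := by
    filter_upwards [hne, (ae_restrict_iff' hfin.measurableSet.compl).1 hfin.ae_eq_zero_compl]
      with x hx hzero
    exact not_not.1 fun hxs => hx (hzero hxs)
  rw [← Measure.restrict_eq_self_of_ae_mem hmem]
  exact hfin.sigmaFinite_restrict

section LevyMeasure

variable {φ : Measure ℝ} (hpos : ∀ᵐ z ∂φ, 0 < z)
  (hint : Integrable (fun z : ℝ => min (z ^ 2) z) φ)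

include hpos hint

lemma integrable_min_sq_comp_mul {c : ℝ} (hc : 0 ≤ c) :
    Integrable (fun z : ℝ => min ((c * z) ^ 2) (c * z)) φ := by
  refine (hint.const_mul (max (c ^ 2) c)).mono' (by fun_prop) ?_
  filter_upwards [hpos] with z hz
  rw [Real.norm_of_nonneg (by positivity), mul_min_of_nonneg _ _ (by positivity), mul_pow]
  gcongr
  · exact le_max_left _ _
  · exact le_max_right _ _

lemma integrable_posPart_sub {x : ℝ} (hx : 0 < x) :
    Integrable (fun z : ℝ => max (z - x) 0) φ := by
  refine ((integrable_min_sq_comp_mul hpos hint (inv_nonneg.2 hx.le)).const_mul x).mono'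
    (by fun_prop) ?_
  filter_upwards [hpos] with z hz
  rw [Real.norm_of_nonneg (le_max_right _ _)]
  refine max_le ?_ (by positivity)
  rcases le_total z x with hzx | hxz
  · exact (sub_nonpos.2 hzx).trans (by positivity)
  · have hone : 1 ≤ x⁻¹ * z := by rwa [inv_mul_eq_div, one_le_div hx]
    rw [min_eq_right (le_self_pow₀ hone two_ne_zero), mul_inv_cancel_left₀ hx.ne']
    exact sub_le_self z hx.le

lemma phiFn_eq_integral_posPart {x : ℝ} (hx : 0 < x) :
    PhiFn φ x = ∫ z, max (z - x) 0 ∂φ := by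
  have hpreimage : (fun t : ℝ => t + x) ⁻¹' Ioi x = Ioi 0 := by
    ext t
    simp
  rw [(integrable_posPart_sub hpos hint hx).integral_eq_integral_meas_lt
    (Eventually.of_forall fun _ => le_max_right _ _), PhiFn, if_pos hx,
    ← (measurePreserving_add_right volume x).setIntegral_preimage_emb
      (measurableEmbedding_addRight x), hpreimage]
  refine setIntegral_congr_fun measurableSet_Ioi fun t ht => ?_
  have hlevel : {z : ℝ | t < max (z - x) 0} = Ioi (t + x) := by
    ext z
    simp [(mem_Ioi.1 ht).not_gt, lt_sub_iff_add_lt]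
  simp only [hlevel, levyTail, measureReal_def]

lemma integrable_compensatedPoisson_mul {c : ℝ} (hc : 0 ≤ c) (j : ℕ) :
    Integrable (fun z => compensatedPoisson (c * z) j) φ := by
  refine (integrable_min_sq_comp_mul hpos hint hc).mono'
    (Continuous.aestronglyMeasurable (by fun_prop)) ?_
  filter_upwards [hpos] with z hz
  exact abs_compensatedPoisson_le (by positivity) j

lemma integrable_prod_exp_neg_mul_posPart [SFinite φ] {ξ : ℂ} (hξ : 0 < ξ.re) :
    Integrable (Function.uncurry fun x z : ℝ =>
      Complex.exp (-ξ * x) * ((max (z - x) 0 : ℝ) : ℂ)) ((volume.restrict (Ioi 0)).prod φ) := by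
  rw [integrable_prod_iff' (Continuous.aestronglyMeasurable (by unfold Function.uncurry; fun_prop))]
  refine ⟨Eventually.of_forall fun z => integrableOn_exp_neg_mul_posPart ξ z, ?_⟩
  refine ((integrable_compensatedPoisson_mul hpos hint hξ.le 0).div_const (ξ.re ^ 2)).congr ?_
  filter_upwards [hpos] with z hz
  exact (integral_norm_exp_neg_mul_posPart hξ.ne' hz.le).symm

lemma psiFn_eq_integral_compensatedExp {ξ : ℂ} (hξ : 0 < ξ.re) :
    psiFn φ ξ = ∫ z : ℝ, compensatedExp (ξ * z) ∂φ := by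
  have hξ0 : ξ ≠ 0 := Complex.ne_zero_of_re_pos hξ
  have : SigmaFinite φ := sigmaFinite_of_integrable_of_ae_ne_zero hint <| by
    filter_upwards [hpos] with z hz
    positivity
  calc psiFn φ ξ
      = ξ ^ 2 * ∫ x in Ioi (0 : ℝ), (∫ z, Complex.exp (-ξ * x) * ((max (z - x) 0 : ℝ) : ℂ) ∂φ) := by
        rw [psiFn]
        congr 1
        refine setIntegral_congr_fun measurableSet_Ioi fun x hx => ?_
        simp only [phiFn_eq_integral_posPart hpos hint hx]
        rw [integral_const_mul, integral_complex_ofReal]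
    _ = ∫ z, (ξ ^ 2 * ∫ x in Ioi (0 : ℝ), Complex.exp (-ξ * x) * ((max (z - x) 0 : ℝ) : ℂ)) ∂φ := by
        rw [integral_integral_swap (integrable_prod_exp_neg_mul_posPart hpos hint hξ),
          integral_const_mul]
    _ = ∫ z : ℝ, compensatedExp (ξ * z) ∂φ := by
        refine integral_congr_ae ?_
        filter_upwards [hpos] with z hz
        rw [integral_exp_neg_mul_posPart hξ0 hz.le, mul_div_cancel₀ _ (pow_ne_zero 2 hξ0)]

lemma hasSum_pow_mul_integral_compensatedPoisson {c : ℝ} (hc : 0 ≤ c) {u : ℂ}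
    (hu : ‖u‖ ≤ 1) :
    HasSum (fun j => u ^ j * ((∫ z, compensatedPoisson (c * z) j ∂φ : ℝ) : ℂ))
      (∫ z : ℝ, compensatedExp ((1 - u) * (c * z)) ∂φ) := by
  have habs : ∀ᵐ z ∂φ, HasSum (fun j => |compensatedPoisson (c * z) j|)
      (2 * |compensatedPoisson (c * z) 1|) := by
    filter_upwards [hpos] with z hz
    exact hasSum_abs_of_hasSum_zero (compensatedPoisson_nonneg (by positivity))
      (hasSum_compensatedPoisson _)
  have hsum := hasSum_integral_of_dominated_convergence (μ := φ)
    (F := fun j z => u ^ j * (compensatedPoisson (c * z) j : ℂ))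
    (f := fun z : ℝ => compensatedExp ((1 - u) * (c * z)))
    (fun j z => |compensatedPoisson (c * z) j|)
    (fun j => Continuous.aestronglyMeasurable (by fun_prop))
    (fun j => Eventually.of_forall fun z => ?_)
    (habs.mono fun z hz => hz.summable)
    (((integrable_compensatedPoisson_mul hpos hint hc 1).abs.const_mul 2).congr
      (habs.mono fun z hz => hz.tsum_eq.symm))
    (Eventually.of_forall fun z => by
      simpa using hasSum_pow_mul_compensatedPoisson u (c * z))
  · simpa only [integral_const_mul, integral_complex_ofReal] using hsum
  · rw [norm_mul, norm_pow, Complex.norm_real, Real.norm_eq_abs]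
    exact mul_le_of_le_one_left (abs_nonneg _) (pow_le_one₀ (norm_nonneg u) hu)

lemma iteratedDeriv_psiFn {c : ℝ} (hc : 0 < c) (j : ℕ) :
    iteratedDeriv j (psiFn φ) c =
      j.factorial * ((-(c : ℂ)⁻¹) ^ j * ((∫ z, compensatedPoisson (c * z) j ∂φ : ℝ) : ℂ)) := by
  refine iteratedDeriv_eq_factorial_mul_of_hasSum
    (a := fun j => (-(c : ℂ)⁻¹) ^ j * ((∫ z, compensatedPoisson (c * z) j ∂φ : ℝ) : ℂ)) ?_ j
  have hsmall : ∀ᶠ v : ℂ in 𝓝 0, ‖v‖ < c := by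
    filter_upwards [Metric.ball_mem_nhds (0 : ℂ) hc] with v hv using mem_ball_zero_iff.1 hv
  filter_upwards [hsmall] with v hv
  have hc0 : (c : ℂ) ≠ 0 := Complex.ofReal_ne_zero.2 hc.ne'
  have hu : ‖-((c : ℂ)⁻¹ * v)‖ ≤ 1 := by
    rw [norm_neg, norm_mul, norm_inv, Complex.norm_real, Real.norm_of_nonneg hc.le, inv_mul_eq_div]
    exact (div_le_one hc).2 hv.le
  have hre : 0 < ((c : ℂ) + v).re := by
    rw [Complex.add_re, Complex.ofReal_re]
    linarith [neg_le_of_abs_le (Complex.abs_re_le_norm v)]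
  have hexp : ∀ z : ℝ, ((c : ℂ) + v) * z = (1 - -((c : ℂ)⁻¹ * v)) * (c * z) := fun z => by
    field_simp
    ring
  have hpow : ∀ n : ℕ, (-((c : ℂ)⁻¹ * v)) ^ n = v ^ n * (-(c : ℂ)⁻¹) ^ n := fun n => by
    rw [← neg_mul, mul_pow, mul_comm]
  simpa only [psiFn_eq_integral_compensatedExp hpos hint hre, hexp, hpow, mul_assoc] using
    hasSum_pow_mul_integral_compensatedPoisson hpos hint hc.le hu

lemma grunPsi_eq_integral_compensatedPoisson {h : ℝ} (hh : 0 < h) (j : ℕ) :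
    grunPsi φ j h = ∫ z, compensatedPoisson (h⁻¹ * z) j ∂φ := by
  rw [grunPsi, one_div, ← Complex.ofReal_inv, iteratedDeriv_psiFn hpos hint (inv_pos.2 hh)]
  set I := ∫ z, compensatedPoisson (h⁻¹ * z) j ∂φ
  have hh0 : (h : ℂ) ≠ 0 := Complex.ofReal_ne_zero.2 hh.ne'
  have hj : (j.factorial : ℂ) ≠ 0 := Nat.cast_ne_zero.2 j.factorial_ne_zero
  have hcoeff : (-1 : ℂ) ^ j / (j.factorial * (h : ℂ) ^ j) * (j.factorial * ((-(h : ℂ)) ^ j * I)) =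
      (-1) ^ j * (-1) ^ j * I := by
    rw [neg_pow (h : ℂ)]
    field_simp
  rw [Complex.ofReal_inv, inv_inv, hcoeff, ← mul_pow, neg_one_mul, neg_neg, one_pow, one_mul,
    Complex.ofReal_re]

lemma grunPsi_nonneg {h : ℝ} (hh : 0 < h) {j : ℕ} (hj : j ≠ 1) :
    0 ≤ grunPsi φ j h := by
  rw [grunPsi_eq_integral_compensatedPoisson hpos hint hh]
  refine integral_nonneg_of_ae ?_
  filter_upwards [hpos] with z hz
  exact compensatedPoisson_nonneg (by positivity) j hj

lemma hasSum_grunPsi {h : ℝ} (hh : 0 < h) :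
    HasSum (fun j => grunPsi φ j h) 0 := by
  rw [← Complex.hasSum_ofReal]
  simpa [grunPsi_eq_integral_compensatedPoisson hpos hint hh, compensatedExp] using
    hasSum_pow_mul_integral_compensatedPoisson hpos hint (inv_nonneg.2 hh.le) (u := 1) (by simp)

end LevyMeasure

namespace H0

variable {φ : Measure ℝ}

lemma ae_pos (hφ : H0 φ) : ∀ᵐ z ∂φ, 0 < z := by
  simpa [ae_iff, Iic] using hφ.1

lemma integrable_min (hφ : H0 φ) : Integrable (fun z : ℝ => min (z ^ 2) z) φ := by
  refine ⟨by fun_prop, ?_⟩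
  rw [hasFiniteIntegral_iff_ofReal]
  · simpa only [Measure.restrict_eq_self_of_ae_mem (s := Ioi 0) hφ.ae_pos] using hφ.2.1
  · filter_upwards [hφ.ae_pos] with z hz
    positivity

end H0

theorem grunwald_scheme_feller_general (φ : Measure ℝ) (hpos : ∀ᵐ z ∂φ, 0 < z)
    (hint : Integrable (fun z : ℝ => min (z ^ 2) z) φ) (h : ℝ) (hh : 0 < h) :
    ∃ A : C₀(ℝ, ℝ) →L[ℝ] C₀(ℝ, ℝ),
      (∀ f : C₀(ℝ, ℝ), ∀ x : ℝ,
        HasSum (fun j : ℕ => grunPsi φ j h * f (x + ((j : ℝ) - 1) * h)) (A f x)) ∧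
      ‖A‖ ≤ 2 * |grunPsi φ 1 h| ∧
      ∀ t : ℝ, 0 ≤ t →
        (∀ f : C₀(ℝ, ℝ), ‖expOp A t f‖ ≤ ‖f‖) ∧
        (∀ f : C₀(ℝ, ℝ), (∀ x : ℝ, 0 ≤ f x) → ∀ x : ℝ, 0 ≤ expOp A t f x) := by
  let G : ℕ → ℝ := fun j => grunPsi φ j h
  have hG : ∀ j ≠ 1, 0 ≤ G j := fun _ => grunPsi_nonneg hpos hint hh
  have hG0 : HasSum G 0 := hasSum_grunPsi hpos hint hh
  let T : ℕ → C₀(ℝ, ℝ) →L[ℝ] C₀(ℝ, ℝ) := fun j => translateC₀ (((j : ℝ) - 1) * h)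
  have hT1 : T 1 = 1 := by simp [T, translateC₀_zero]
  have hTnorm : ∀ j, ‖T j‖ ≤ 1 := fun j => norm_compC₀_le_one _
  have hTnonneg : ∀ j, MapsTo (T j) (nonnegC₀ ℝ) (nonnegC₀ ℝ) := fun j => mapsTo_compC₀_nonnegC₀ _
  obtain ⟨A, hA⟩ := summable_smul_of_hasSum_zero hG hG0 hTnorm
  have hAbound : ‖A‖ ≤ 2 * |G 1| := norm_le_two_mul_abs_of_hasSum_smul hG hG0 hTnorm hA
  have hAnorm : ‖A + |G 1| • 1‖ ≤ |G 1| := norm_add_abs_smul_one_le hG hG0 hTnorm hT1 hA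
  have hAnonneg : MapsTo (A + |G 1| • 1 : C₀(ℝ, ℝ) →L[ℝ] C₀(ℝ, ℝ)) (nonnegC₀ ℝ) (nonnegC₀ ℝ) :=
    mapsTo_add_abs_smul_one hG hG0 hTnonneg hT1 hA
  have hAapply : ∀ f : C₀(ℝ, ℝ), ∀ x : ℝ,
      HasSum (fun j : ℕ => G j * f (x + ((j : ℝ) - 1) * h)) (A f x) := fun f x =>
    (hA.mapL (ContinuousLinearMap.apply ℝ C₀(ℝ, ℝ) f)).mapL (evalC₀ x)
  exact ⟨A, hAapply, hAbound, fun t ht =>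
    ⟨norm_expOp_apply_le hAnorm ht, fun _ hf => expOp_apply_nonneg hAnonneg ht hf⟩⟩

/-- for fixed `h > 0`, the Grünwald-type scheme
`A_h f (x) = Σ_j G^ψ_{j,h} f(x + (j-1)h)` defines a bounded operator on `C₀(ℝ)` with
`‖A_h‖ ≤ 2|G^ψ_{1,h}|`, whose exponentials `e^{t A_h}`, `t ≥ 0`, are positive
contractions on `C₀(ℝ)`. -/
theorem grunwald_scheme_feller (φ : Measure ℝ) (hH0 : H0 φ) (h : ℝ) (hh : 0 < h) :
    ∃ A : C₀(ℝ, ℝ) →L[ℝ] C₀(ℝ, ℝ),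
      (∀ f : C₀(ℝ, ℝ), ∀ x : ℝ,
        A f x = ∑' j : ℕ, grunPsi φ j h * f (x + ((j : ℝ) - 1) * h)) ∧
      ‖A‖ ≤ 2 * |grunPsi φ 1 h| ∧
      ∀ t : ℝ, 0 ≤ t →
        (∀ f : C₀(ℝ, ℝ), ‖expOp A t f‖ ≤ ‖f‖) ∧
        (∀ f : C₀(ℝ, ℝ), (∀ x : ℝ, 0 ≤ f x) → ∀ x : ℝ, 0 ≤ expOp A t f x) := by
  obtain ⟨A, hA, hAh⟩ := grunwald_scheme_feller_general φ hH0.ae_pos hH0.integrable_min h hh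
  exact ⟨A, fun f x => (hA f x).tsum_eq.symm, hAh⟩
end
end
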